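/- arXiv:1409.5184 — 3 statements merged into one kernel-verified Lean document; each statement's English description precedes it below -/
import Mathlib

section
/- Let (H,α) be a monoidal Hom-Hopf algebra with bijective antipode S, (A,β) a right (H,α)-Hom-comodule algebra, and suppose λ_A: A⊗H→A is a right (H,α)-colinear retraction of ρ_A (i.e. λ_A∘ρ_A = id_A, λ_A∘(β⊗α)=β∘λ_A, and λ_A is colinear for the coaction (a⊗h)↦(β⁻¹(a)⊗h₁)⊗α(h₂) on A⊗H). Let (N,ν) be a right (H,A)-Hom-Hopf module. Then the linear map f: N⊗(A⊗H)→N defined by f(n⊗(a⊗h)) = ν(n₍₀₎)·λ_A(a ⊗ S(α⁻¹(n₍₁₎))α⁻¹(h)) is surjective (indeed f(n₍₀₎⊗(1_A⊗α⁻¹(n₍₁₎)))=n for all n∈N) and is right (H,α)-colinear, where N⊗(A⊗H) carries the coaction n⊗(a⊗h) ↦ (ν⁻¹(n)⊗(β⁻¹(a)⊗h₁))⊗α²(h₂). -/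
open TensorProduct

noncomputable section

/-- A (unital) monoidal Hom-bialgebra, following Caenepeel–Goyvaerts.
The algebra axioms are stated pointwise, the coalgebra axioms at the level of
linear maps (using the standard vector-space associator to compare the two
sides of Hom-coassociativity). -/
structure MonoidalHomBialgebra (k : Type) [Field k] (H : Type) [AddCommGroup H] [Module k H] where
  mul : H →ₗ[k] H →ₗ[k] H
  one : H
  comul : H →ₗ[k] H ⊗[k] H
  counit : H →ₗ[k] k
  aut : H ≃ₗ[k] H
  hom_assoc : ∀ a b c, mul (aut a) (mul b c) = mul (mul a b) (aut c)
  mulOne : ∀ a, mul a one = aut a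
  oneMul : ∀ a, mul one a = aut a
  aut_mul : ∀ a b, aut (mul a b) = mul (aut a) (aut b)
  aut_one : aut one = one
  coassoc :
    (TensorProduct.assoc k H H H).toLinearMap ∘ₗ
        (TensorProduct.map comul aut.symm.toLinearMap) ∘ₗ comul =
      (TensorProduct.map aut.symm.toLinearMap comul) ∘ₗ comul
  counit_left :
    (TensorProduct.lid k H).toLinearMap ∘ₗ (TensorProduct.map counit LinearMap.id) ∘ₗ comul =
      aut.symm.toLinearMap
  counit_right :
    (TensorProduct.rid k H).toLinearMap ∘ₗ (TensorProduct.map LinearMap.id counit) ∘ₗ comul =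
      aut.symm.toLinearMap
  comul_aut :
    comul ∘ₗ aut.toLinearMap = (TensorProduct.map aut.toLinearMap aut.toLinearMap) ∘ₗ comul
  counit_aut : counit ∘ₗ aut.toLinearMap = counit
  comul_mul :
    comul ∘ₗ TensorProduct.lift mul =
      (TensorProduct.map (TensorProduct.lift mul) (TensorProduct.lift mul)) ∘ₗ
        (TensorProduct.tensorTensorTensorComm k H H H H).toLinearMap ∘ₗ
          (TensorProduct.map comul comul)
  comul_one : comul one = one ⊗ₜ[k] one
  counit_mul : ∀ a b, counit (mul a b) = counit a * counit b
  counit_one : counit one = 1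

/-- A monoidal Hom-Hopf algebra: a monoidal Hom-bialgebra with an antipode. -/
structure MonoidalHomHopf (k : Type) [Field k] (H : Type) [AddCommGroup H] [Module k H]
    extends MonoidalHomBialgebra k H where
  antipode : H →ₗ[k] H
  antipode_aut : antipode ∘ₗ aut.toLinearMap = aut.toLinearMap ∘ₗ antipode
  antipode_mul_left :
    TensorProduct.lift mul ∘ₗ (TensorProduct.map antipode LinearMap.id) ∘ₗ comul =
      LinearMap.toSpanSingleton k H one ∘ₗ counit
  antipode_mul_right :
    TensorProduct.lift mul ∘ₗ (TensorProduct.map LinearMap.id antipode) ∘ₗ comul =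
      LinearMap.toSpanSingleton k H one ∘ₗ counit

variable {k : Type} [Field k] {H : Type} [AddCommGroup H] [Module k H]

/-- A right (H,α)-Hom-comodule. -/
structure HomComodule (Hb : MonoidalHomBialgebra k H) (M : Type) [AddCommGroup M] [Module k M] where
  coact : M →ₗ[k] M ⊗[k] H
  aut : M ≃ₗ[k] M
  coassoc :
    (TensorProduct.map aut.symm.toLinearMap Hb.comul) ∘ₗ coact =
      (TensorProduct.assoc k M H H).toLinearMap ∘ₗ
        (TensorProduct.map coact Hb.aut.symm.toLinearMap) ∘ₗ coact
  counit :
    (TensorProduct.rid k M).toLinearMap ∘ₗ (TensorProduct.map LinearMap.id Hb.counit) ∘ₗ coact =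
      aut.symm.toLinearMap
  coact_aut :
    coact ∘ₗ aut.toLinearMap = (TensorProduct.map aut.toLinearMap Hb.aut.toLinearMap) ∘ₗ coact

/-- A left (H,α)-Hom-comodule. -/
structure HomLeftComodule (Hb : MonoidalHomBialgebra k H) (M : Type) [AddCommGroup M] [Module k M] where
  coact : M →ₗ[k] H ⊗[k] M
  aut : M ≃ₗ[k] M
  coassoc :
    (TensorProduct.map Hb.comul aut.symm.toLinearMap) ∘ₗ coact =
      (TensorProduct.assoc k H H M).symm.toLinearMap ∘ₗ
        (TensorProduct.map Hb.aut.symm.toLinearMap coact) ∘ₗ coact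
  counit :
    (TensorProduct.lid k M).toLinearMap ∘ₗ (TensorProduct.map Hb.counit LinearMap.id) ∘ₗ coact =
      aut.symm.toLinearMap
  coact_aut :
    coact ∘ₗ aut.toLinearMap = (TensorProduct.map Hb.aut.toLinearMap aut.toLinearMap) ∘ₗ coact

/-- A right (H,α)-Hom-comodule algebra. -/
structure HomComoduleAlgebra (Hb : MonoidalHomBialgebra k H) (A : Type) [AddCommGroup A] [Module k A] where
  mul : A →ₗ[k] A →ₗ[k] A
  one : A
  aut : A ≃ₗ[k] A
  hom_assoc : ∀ a b c, mul (aut a) (mul b c) = mul (mul a b) (aut c)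
  mulOne : ∀ a, mul a one = aut a
  oneMul : ∀ a, mul one a = aut a
  aut_mul : ∀ a b, aut (mul a b) = mul (aut a) (aut b)
  aut_one : aut one = one
  coact : A →ₗ[k] A ⊗[k] H
  coassoc :
    (TensorProduct.map aut.symm.toLinearMap Hb.comul) ∘ₗ coact =
      (TensorProduct.assoc k A H H).toLinearMap ∘ₗ
        (TensorProduct.map coact Hb.aut.symm.toLinearMap) ∘ₗ coact
  counit :
    (TensorProduct.rid k A).toLinearMap ∘ₗ (TensorProduct.map LinearMap.id Hb.counit) ∘ₗ coact =
      aut.symm.toLinearMap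
  coact_aut :
    coact ∘ₗ aut.toLinearMap = (TensorProduct.map aut.toLinearMap Hb.aut.toLinearMap) ∘ₗ coact
  coact_mul :
    coact ∘ₗ TensorProduct.lift mul =
      (TensorProduct.map (TensorProduct.lift mul) (TensorProduct.lift Hb.mul)) ∘ₗ
        (TensorProduct.tensorTensorTensorComm k A H A H).toLinearMap ∘ₗ
          (TensorProduct.map coact coact)
  coact_one : coact one = one ⊗ₜ[k] Hb.one

variable {A : Type} [AddCommGroup A] [Module k A]

/-- A right (A,β)-Hom-module. -/
structure HomModule {Hb : MonoidalHomBialgebra k H} (Ac : HomComoduleAlgebra Hb A)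
    (M : Type) [AddCommGroup M] [Module k M] where
  act : M →ₗ[k] A →ₗ[k] M
  aut : M ≃ₗ[k] M
  act_act : ∀ m a b, act (act m a) (Ac.aut b) = act (aut m) (Ac.mul a b)
  act_one : ∀ m, act m Ac.one = aut m
  aut_act : ∀ m a, aut (act m a) = act (aut m) (Ac.aut a)

/-- A right Hom-module over the subalgebra of `A` carved out by `Bset`
(typically the coinvariants `B = A^{co H}`): the action is a bilinear map
`M × A → M` whose Hom-module axioms are only required on `Bset`. -/
structure HomModuleOn {Hb : MonoidalHomBialgebra k H} (Ac : HomComoduleAlgebra Hb A)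
    (Bset : Set A) (M : Type) [AddCommGroup M] [Module k M] where
  act : M →ₗ[k] A →ₗ[k] M
  aut : M ≃ₗ[k] M
  act_act : ∀ m, ∀ b ∈ Bset, ∀ b' ∈ Bset, act (act m b) (Ac.aut b') = act (aut m) (Ac.mul b b')
  act_one : ∀ m, act m Ac.one = aut m
  aut_act : ∀ m, ∀ b ∈ Bset, aut (act m b) = act (aut m) (Ac.aut b)

/-- A left Hom-module over the subalgebra of `A` carved out by `Bset`. -/
structure HomLeftModuleOn {Hb : MonoidalHomBialgebra k H} (Ac : HomComoduleAlgebra Hb A)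
    (Bset : Set A) (M : Type) [AddCommGroup M] [Module k M] where
  act : A →ₗ[k] M →ₗ[k] M
  aut : M ≃ₗ[k] M
  act_act : ∀ m, ∀ b ∈ Bset, ∀ b' ∈ Bset, act (Ac.aut b) (act b' m) = act (Ac.mul b b') (aut m)
  act_one : ∀ m, act Ac.one m = aut m
  aut_act : ∀ m, ∀ b ∈ Bset, aut (act b m) = act (Ac.aut b) (aut m)

/-- A right-right (H,A)-Hom-Hopf module (a relative Hom-Hopf module). -/
structure HomHopfModule {Hb : MonoidalHomBialgebra k H} (Ac : HomComoduleAlgebra Hb A)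
    (N : Type) [AddCommGroup N] [Module k N] where
  act : N →ₗ[k] A →ₗ[k] N
  aut : N ≃ₗ[k] N
  act_act : ∀ n a b, act (act n a) (Ac.aut b) = act (aut n) (Ac.mul a b)
  act_one : ∀ n, act n Ac.one = aut n
  aut_act : ∀ n a, aut (act n a) = act (aut n) (Ac.aut a)
  coact : N →ₗ[k] N ⊗[k] H
  coassoc :
    (TensorProduct.map aut.symm.toLinearMap Hb.comul) ∘ₗ coact =
      (TensorProduct.assoc k N H H).toLinearMap ∘ₗ
        (TensorProduct.map coact Hb.aut.symm.toLinearMap) ∘ₗ coact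
  counit :
    (TensorProduct.rid k N).toLinearMap ∘ₗ (TensorProduct.map LinearMap.id Hb.counit) ∘ₗ coact =
      aut.symm.toLinearMap
  coact_aut :
    coact ∘ₗ aut.toLinearMap = (TensorProduct.map aut.toLinearMap Hb.aut.toLinearMap) ∘ₗ coact
  compat :
    coact ∘ₗ TensorProduct.lift act =
      (TensorProduct.map (TensorProduct.lift act) (TensorProduct.lift Hb.mul)) ∘ₗ
        (TensorProduct.tensorTensorTensorComm k N H A H).toLinearMap ∘ₗ
          (TensorProduct.map coact Ac.coact)

/-- A left-right (H,A)-Hom-Hopf module. -/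
structure LRHomHopfModule {Hb : MonoidalHomBialgebra k H} (Ac : HomComoduleAlgebra Hb A)
    (N : Type) [AddCommGroup N] [Module k N] where
  act : A →ₗ[k] N →ₗ[k] N
  aut : N ≃ₗ[k] N
  act_act : ∀ n a b, act (Ac.aut a) (act b n) = act (Ac.mul a b) (aut n)
  act_one : ∀ n, act Ac.one n = aut n
  aut_act : ∀ n a, aut (act a n) = act (Ac.aut a) (aut n)
  coact : N →ₗ[k] N ⊗[k] H
  coassoc :
    (TensorProduct.map aut.symm.toLinearMap Hb.comul) ∘ₗ coact =
      (TensorProduct.assoc k N H H).toLinearMap ∘ₗ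
        (TensorProduct.map coact Hb.aut.symm.toLinearMap) ∘ₗ coact
  counit :
    (TensorProduct.rid k N).toLinearMap ∘ₗ (TensorProduct.map LinearMap.id Hb.counit) ∘ₗ coact =
      aut.symm.toLinearMap
  coact_aut :
    coact ∘ₗ aut.toLinearMap = (TensorProduct.map aut.toLinearMap Hb.aut.toLinearMap) ∘ₗ coact
  compat :
    coact ∘ₗ TensorProduct.lift act =
      (TensorProduct.map (TensorProduct.lift act) (TensorProduct.lift Hb.mul)) ∘ₗ
        (TensorProduct.tensorTensorTensorComm k A H N H).toLinearMap ∘ₗ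
          (TensorProduct.map Ac.coact coact)

/-- Coinvariants (as a set) of a coaction `coact` with structure automorphism `autM`. -/
def coinvSetOf {M : Type} [AddCommGroup M] [Module k M] (oneH : H)
    (coact : M →ₗ[k] M ⊗[k] H) (autM : M ≃ₗ[k] M) : Set M :=
  {m | coact m = autM.symm m ⊗ₜ[k] oneH}

/-- Coinvariants as a submodule. -/
def coinvSubmoduleOf {M : Type} [AddCommGroup M] [Module k M] (oneH : H)
    (coact : M →ₗ[k] M ⊗[k] H) (autM : M ≃ₗ[k] M) : Submodule k M :=
  LinearMap.ker (coact - ((TensorProduct.mk k M H).flip oneH) ∘ₗ autM.symm.toLinearMap)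

/-- The coinvariants `B = A^{co H}` of a Hom-comodule algebra. -/
def coinvA {Hb : MonoidalHomBialgebra k H} (Ac : HomComoduleAlgebra Hb A) : Set A :=
  coinvSetOf Hb.one Ac.coact Ac.aut

/-- The defining relations of the tensor product `M ⊗_B A` for a right `B`-Hom-module `M`. -/
def relSubR {M : Type} [AddCommGroup M] [Module k M]
    (mulA : A →ₗ[k] A →ₗ[k] A) (autA : A ≃ₗ[k] A) (Bset : Set A)
    (act : M →ₗ[k] A →ₗ[k] M) (autM : M ≃ₗ[k] M) : Submodule k (M ⊗[k] A) :=
  Submodule.span k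
    {x | ∃ m a b, b ∈ Bset ∧ x = act m b ⊗ₜ[k] autA a - autM m ⊗ₜ[k] mulA b a}

/-- The defining relations of the tensor product `A ⊗_B M` for a left `B`-Hom-module `M`. -/
def relSubL {M : Type} [AddCommGroup M] [Module k M]
    (mulA : A →ₗ[k] A →ₗ[k] A) (autA : A ≃ₗ[k] A) (Bset : Set A)
    (act : A →ₗ[k] M →ₗ[k] M) (autM : M ≃ₗ[k] M) : Submodule k (A ⊗[k] M) :=
  Submodule.span k
    {x | ∃ a m b, b ∈ Bset ∧ x = autA a ⊗ₜ[k] act b m - mulA a b ⊗ₜ[k] autM m}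

/-- The cotensor product `X □_H V` of a right Hom-comodule and a left Hom-comodule,
as a submodule of `X ⊗ V`. -/
def cotensorSub {X V : Type} [AddCommGroup X] [Module k X] [AddCommGroup V] [Module k V]
    (coactX : X →ₗ[k] X ⊗[k] H) (autX : X ≃ₗ[k] X)
    (coactV : V →ₗ[k] H ⊗[k] V) (autV : V ≃ₗ[k] V) : Submodule k (X ⊗[k] V) :=
  LinearMap.ker
    ((TensorProduct.map coactX autV.symm.toLinearMap) -
      ((TensorProduct.assoc k X H V).symm.toLinearMap ∘ₗ
        TensorProduct.map autX.symm.toLinearMap coactV))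

/-- The canonical Galois map at the level of `A ⊗ A`:
`a ⊗ b ↦ β⁻¹(a)·b₍₀₎ ⊗ α(b₍₁₎)`. -/
def canPreLin {Hb : MonoidalHomBialgebra k H} (Ac : HomComoduleAlgebra Hb A) :
    A ⊗[k] A →ₗ[k] A ⊗[k] H :=
  (TensorProduct.map (TensorProduct.lift Ac.mul) Hb.aut.toLinearMap) ∘ₗ
    (TensorProduct.assoc k A A H).symm.toLinearMap ∘ₗ
      (TensorProduct.map Ac.aut.symm.toLinearMap Ac.coact)

/-- The second canonical Galois map at the level of `A ⊗ A`:
`a ⊗ b ↦ a₍₀₎·β⁻¹(b) ⊗ α(a₍₁₎)`. -/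
def canPreLin' {Hb : MonoidalHomBialgebra k H} (Ac : HomComoduleAlgebra Hb A) :
    A ⊗[k] A →ₗ[k] A ⊗[k] H :=
  (TensorProduct.map (TensorProduct.lift Ac.mul) Hb.aut.toLinearMap) ∘ₗ
    (TensorProduct.assoc k A A H).symm.toLinearMap ∘ₗ
      (TensorProduct.map LinearMap.id (TensorProduct.comm k H A).toLinearMap) ∘ₗ
        (TensorProduct.assoc k A H A).toLinearMap ∘ₗ
          (TensorProduct.map Ac.coact Ac.aut.symm.toLinearMap)

/-- `φ : H → A` is a total integral. -/
def IsTotalIntegral {Hb : MonoidalHomBialgebra k H} (Ac : HomComoduleAlgebra Hb A)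
    (φ : H →ₗ[k] A) : Prop :=
  φ ∘ₗ Hb.aut.toLinearMap = Ac.aut.toLinearMap ∘ₗ φ ∧
    Ac.coact ∘ₗ φ = (TensorProduct.map φ LinearMap.id) ∘ₗ Hb.comul ∧
      φ Hb.one = Ac.one

/-- The Hom-comodule structure on `M ⊗ A` inducing that of `M ⊗_B A`:
`m ⊗ a ↦ (μ⁻¹(m) ⊗ a₍₀₎) ⊗ α(a₍₁₎)`. -/
def quotCoactPreR {Hb : MonoidalHomBialgebra k H} (Ac : HomComoduleAlgebra Hb A)
    {M : Type} [AddCommGroup M] [Module k M] (autM : M ≃ₗ[k] M) :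
    (M ⊗[k] A) →ₗ[k] (M ⊗[k] A) ⊗[k] H :=
  (TensorProduct.assoc k M A H).symm.toLinearMap ∘ₗ
    TensorProduct.map autM.symm.toLinearMap
      ((TensorProduct.map LinearMap.id Hb.aut.toLinearMap) ∘ₗ Ac.coact)

/-- The Hom-comodule structure on `A ⊗ M` inducing that of `A ⊗_B M`:
`a ⊗ m ↦ (a₍₀₎ ⊗ μ⁻¹(m)) ⊗ α(a₍₁₎)`. -/
def quotCoactPreL {Hb : MonoidalHomBialgebra k H} (Ac : HomComoduleAlgebra Hb A)
    {M : Type} [AddCommGroup M] [Module k M] (autM : M ≃ₗ[k] M) :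
    (A ⊗[k] M) →ₗ[k] (A ⊗[k] M) ⊗[k] H :=
  (TensorProduct.assoc k A M H).symm.toLinearMap ∘ₗ
    (TensorProduct.map LinearMap.id (TensorProduct.comm k H M).toLinearMap) ∘ₗ
      (TensorProduct.assoc k A H M).toLinearMap ∘ₗ
        TensorProduct.map
          ((TensorProduct.map LinearMap.id Hb.aut.toLinearMap) ∘ₗ Ac.coact)
          autM.symm.toLinearMap

/-- Bijectivity of the adjunction unit `η_M : M → (M ⊗_B A)^{co H}`, `m ↦ μ⁻¹(m) ⊗ 1_A`,
for a right `B`-Hom-module `M`.  Since the Hom-comodule structure of `M ⊗_B A` is the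
one induced from `M ⊗ A`, it is quantified over all maps `ρbar` (resp. `θ`) induced by
the comodule structure (resp. by `μ⁻¹ ⊗ β⁻¹`) on `M ⊗ A`. -/
def UnitBijectiveR {Hb : MonoidalHomBialgebra k H} (Ac : HomComoduleAlgebra Hb A)
    (Bset : Set A) {M : Type} [AddCommGroup M] [Module k M]
    (S : HomModuleOn Ac Bset M) : Prop :=
  ∀ (ρbar : ((M ⊗[k] A) ⧸ relSubR Ac.mul Ac.aut Bset S.act S.aut) →ₗ[k]
      ((M ⊗[k] A) ⧸ relSubR Ac.mul Ac.aut Bset S.act S.aut) ⊗[k] H)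
    (θ : ((M ⊗[k] A) ⧸ relSubR Ac.mul Ac.aut Bset S.act S.aut) →ₗ[k]
      ((M ⊗[k] A) ⧸ relSubR Ac.mul Ac.aut Bset S.act S.aut)),
    ρbar ∘ₗ (relSubR Ac.mul Ac.aut Bset S.act S.aut).mkQ =
      (TensorProduct.map (relSubR Ac.mul Ac.aut Bset S.act S.aut).mkQ LinearMap.id) ∘ₗ
        quotCoactPreR Ac S.aut →
    θ ∘ₗ (relSubR Ac.mul Ac.aut Bset S.act S.aut).mkQ =
      (relSubR Ac.mul Ac.aut Bset S.act S.aut).mkQ ∘ₗ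
        TensorProduct.map S.aut.symm.toLinearMap Ac.aut.symm.toLinearMap →
    ((∀ m : M, ρbar ((relSubR Ac.mul Ac.aut Bset S.act S.aut).mkQ (S.aut.symm m ⊗ₜ[k] Ac.one)) =
        θ ((relSubR Ac.mul Ac.aut Bset S.act S.aut).mkQ (S.aut.symm m ⊗ₜ[k] Ac.one)) ⊗ₜ[k] Hb.one) ∧
      Function.Injective
        (fun m : M => (relSubR Ac.mul Ac.aut Bset S.act S.aut).mkQ (S.aut.symm m ⊗ₜ[k] Ac.one)) ∧
      ∀ x, ρbar x = θ x ⊗ₜ[k] Hb.one →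
        ∃ m : M, (relSubR Ac.mul Ac.aut Bset S.act S.aut).mkQ (S.aut.symm m ⊗ₜ[k] Ac.one) = x)

/-- The relations of `N^{co H} ⊗_B A` for a right (H,A)-Hom-Hopf module `N`;
the closure of the coinvariants under the `B`-action and the automorphism is
encoded by existential membership. -/
def relCoinvR {Hb : MonoidalHomBialgebra k H} (Ac : HomComoduleAlgebra Hb A)
    (Bset : Set A) {N : Type} [AddCommGroup N] [Module k N]
    (P : HomHopfModule Ac N) :
    Submodule k ((coinvSubmoduleOf Hb.one P.coact P.aut : Submodule k N) ⊗[k] A) :=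
  Submodule.span k
    {x | ∃ (n n' n'' : coinvSubmoduleOf Hb.one P.coact P.aut) (a b : A), b ∈ Bset ∧
      (n' : N) = P.act n b ∧ (n'' : N) = P.aut n ∧
      x = n' ⊗ₜ[k] Ac.aut a - n'' ⊗ₜ[k] Ac.mul b a}

/-- The counit of the adjunction at the level of `N^{co H} ⊗ A`: `n ⊗ a ↦ n · a`. -/
def counitPre {Hb : MonoidalHomBialgebra k H} (Ac : HomComoduleAlgebra Hb A)
    {N : Type} [AddCommGroup N] [Module k N] (P : HomHopfModule Ac N) :
    ((coinvSubmoduleOf Hb.one P.coact P.aut : Submodule k N) ⊗[k] A) →ₗ[k] N :=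
  TensorProduct.lift (P.act ∘ₗ (coinvSubmoduleOf Hb.one P.coact P.aut).subtype)

/-- Bijectivity of the adjunction counit `ε_N : N^{co H} ⊗_B A → N`, `n ⊗ a ↦ n·a`:
equivalently, the lift `N^{co H} ⊗ A → N` is surjective and its kernel is exactly
the defining relations of `⊗_B`. -/
def CounitBijectiveR {Hb : MonoidalHomBialgebra k H} (Ac : HomComoduleAlgebra Hb A)
    (Bset : Set A) {N : Type} [AddCommGroup N] [Module k N]
    (P : HomHopfModule Ac N) : Prop :=
  Function.Surjective (counitPre Ac P) ∧ LinearMap.ker (counitPre Ac P) = relCoinvR Ac Bset P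

/-- Bijectivity of the adjunction unit `η'_M : M → (A ⊗_B M)^{co H}`, `m ↦ 1_A ⊗ μ⁻¹(m)`,
for a left `B`-Hom-module `M`. -/
def UnitBijectiveL {Hb : MonoidalHomBialgebra k H} (Ac : HomComoduleAlgebra Hb A)
    (Bset : Set A) {M : Type} [AddCommGroup M] [Module k M]
    (S : HomLeftModuleOn Ac Bset M) : Prop :=
  ∀ (ρbar : ((A ⊗[k] M) ⧸ relSubL Ac.mul Ac.aut Bset S.act S.aut) →ₗ[k]
      ((A ⊗[k] M) ⧸ relSubL Ac.mul Ac.aut Bset S.act S.aut) ⊗[k] H)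
    (θ : ((A ⊗[k] M) ⧸ relSubL Ac.mul Ac.aut Bset S.act S.aut) →ₗ[k]
      ((A ⊗[k] M) ⧸ relSubL Ac.mul Ac.aut Bset S.act S.aut)),
    ρbar ∘ₗ (relSubL Ac.mul Ac.aut Bset S.act S.aut).mkQ =
      (TensorProduct.map (relSubL Ac.mul Ac.aut Bset S.act S.aut).mkQ LinearMap.id) ∘ₗ
        quotCoactPreL Ac S.aut →
    θ ∘ₗ (relSubL Ac.mul Ac.aut Bset S.act S.aut).mkQ =
      (relSubL Ac.mul Ac.aut Bset S.act S.aut).mkQ ∘ₗ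
        TensorProduct.map Ac.aut.symm.toLinearMap S.aut.symm.toLinearMap →
    ((∀ m : M, ρbar ((relSubL Ac.mul Ac.aut Bset S.act S.aut).mkQ (Ac.one ⊗ₜ[k] S.aut.symm m)) =
        θ ((relSubL Ac.mul Ac.aut Bset S.act S.aut).mkQ (Ac.one ⊗ₜ[k] S.aut.symm m)) ⊗ₜ[k] Hb.one) ∧
      Function.Injective
        (fun m : M => (relSubL Ac.mul Ac.aut Bset S.act S.aut).mkQ (Ac.one ⊗ₜ[k] S.aut.symm m)) ∧
      ∀ x, ρbar x = θ x ⊗ₜ[k] Hb.one →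
        ∃ m : M, (relSubL Ac.mul Ac.aut Bset S.act S.aut).mkQ (Ac.one ⊗ₜ[k] S.aut.symm m) = x)

/-- The relations of `A ⊗_B N^{co H}` for a left-right (H,A)-Hom-Hopf module `N`. -/
def relCoinvL {Hb : MonoidalHomBialgebra k H} (Ac : HomComoduleAlgebra Hb A)
    (Bset : Set A) {N : Type} [AddCommGroup N] [Module k N]
    (P : LRHomHopfModule Ac N) :
    Submodule k (A ⊗[k] (coinvSubmoduleOf Hb.one P.coact P.aut : Submodule k N)) :=
  Submodule.span k
    {x | ∃ (n n' n'' : coinvSubmoduleOf Hb.one P.coact P.aut) (a b : A), b ∈ Bset ∧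
      (n' : N) = P.act b n ∧ (n'' : N) = P.aut n ∧
      x = Ac.aut a ⊗ₜ[k] n' - Ac.mul a b ⊗ₜ[k] n''}

/-- The counit at the level of `A ⊗ N^{co H}`: `a ⊗ n ↦ a · n`. -/
def counitPreL {Hb : MonoidalHomBialgebra k H} (Ac : HomComoduleAlgebra Hb A)
    {N : Type} [AddCommGroup N] [Module k N] (P : LRHomHopfModule Ac N) :
    (A ⊗[k] (coinvSubmoduleOf Hb.one P.coact P.aut : Submodule k N)) →ₗ[k] N :=
  TensorProduct.lift (P.act.compl₂ (coinvSubmoduleOf Hb.one P.coact P.aut).subtype)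

/-- Bijectivity of the counit `ε'_N : A ⊗_B N^{co H} → N`. -/
def CounitBijectiveL {Hb : MonoidalHomBialgebra k H} (Ac : HomComoduleAlgebra Hb A)
    (Bset : Set A) {N : Type} [AddCommGroup N] [Module k N]
    (P : LRHomHopfModule Ac N) : Prop :=
  Function.Surjective (counitPreL Ac P) ∧ LinearMap.ker (counitPreL Ac P) = relCoinvL Ac Bset P

/-- A morphism of right `B`-Hom-modules. -/
def IsHomModuleOnHomR {Hb : MonoidalHomBialgebra k H} (Ac : HomComoduleAlgebra Hb A)
    (Bset : Set A) {M₁ M₂ : Type} [AddCommGroup M₁] [Module k M₁] [AddCommGroup M₂] [Module k M₂]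
    (S₁ : HomModuleOn Ac Bset M₁) (S₂ : HomModuleOn Ac Bset M₂) (f : M₁ →ₗ[k] M₂) : Prop :=
  (∀ m, ∀ b ∈ Bset, f (S₁.act m b) = S₂.act (f m) b) ∧ ∀ m, f (S₁.aut m) = S₂.aut (f m)

/-- A morphism of left `B`-Hom-modules. -/
def IsHomModuleOnHomL {Hb : MonoidalHomBialgebra k H} (Ac : HomComoduleAlgebra Hb A)
    (Bset : Set A) {M₁ M₂ : Type} [AddCommGroup M₁] [Module k M₁] [AddCommGroup M₂] [Module k M₂]
    (S₁ : HomLeftModuleOn Ac Bset M₁) (S₂ : HomLeftModuleOn Ac Bset M₂) (f : M₁ →ₗ[k] M₂) : Prop :=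
  (∀ m, ∀ b ∈ Bset, f (S₁.act b m) = S₂.act b (f m)) ∧ ∀ m, f (S₁.aut m) = S₂.aut (f m)

/-- `A` is faithfully flat as a left `B`-Hom-module: the induced functor `− ⊗_B A`
on right `B`-Hom-modules preserves and reflects exactness. -/
def FaithfullyFlatLeftOf {Hb : MonoidalHomBialgebra k H} (Ac : HomComoduleAlgebra Hb A)
    (Bset : Set A) : Prop :=
  ∀ (M₁ M₂ M₃ : Type) [AddCommGroup M₁] [Module k M₁] [AddCommGroup M₂] [Module k M₂]
    [AddCommGroup M₃] [Module k M₃]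
    (S₁ : HomModuleOn Ac Bset M₁) (S₂ : HomModuleOn Ac Bset M₂) (S₃ : HomModuleOn Ac Bset M₃)
    (f : M₁ →ₗ[k] M₂) (g : M₂ →ₗ[k] M₃),
    IsHomModuleOnHomR Ac Bset S₁ S₂ f → IsHomModuleOnHomR Ac Bset S₂ S₃ g →
    ∀ (fbar : ((M₁ ⊗[k] A) ⧸ relSubR Ac.mul Ac.aut Bset S₁.act S₁.aut) →ₗ[k]
        ((M₂ ⊗[k] A) ⧸ relSubR Ac.mul Ac.aut Bset S₂.act S₂.aut))
      (gbar : ((M₂ ⊗[k] A) ⧸ relSubR Ac.mul Ac.aut Bset S₂.act S₂.aut) →ₗ[k]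
        ((M₃ ⊗[k] A) ⧸ relSubR Ac.mul Ac.aut Bset S₃.act S₃.aut)),
      fbar ∘ₗ (relSubR Ac.mul Ac.aut Bset S₁.act S₁.aut).mkQ =
        (relSubR Ac.mul Ac.aut Bset S₂.act S₂.aut).mkQ ∘ₗ TensorProduct.map f LinearMap.id →
      gbar ∘ₗ (relSubR Ac.mul Ac.aut Bset S₂.act S₂.aut).mkQ =
        (relSubR Ac.mul Ac.aut Bset S₃.act S₃.aut).mkQ ∘ₗ TensorProduct.map g LinearMap.id →
      (LinearMap.range f = LinearMap.ker g ↔ LinearMap.range fbar = LinearMap.ker gbar)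

/-- `A` is faithfully flat as a right `B`-Hom-module: the induced functor `A ⊗_B −`
on left `B`-Hom-modules preserves and reflects exactness. -/
def FaithfullyFlatRightOf {Hb : MonoidalHomBialgebra k H} (Ac : HomComoduleAlgebra Hb A)
    (Bset : Set A) : Prop :=
  ∀ (M₁ M₂ M₃ : Type) [AddCommGroup M₁] [Module k M₁] [AddCommGroup M₂] [Module k M₂]
    [AddCommGroup M₃] [Module k M₃]
    (S₁ : HomLeftModuleOn Ac Bset M₁) (S₂ : HomLeftModuleOn Ac Bset M₂)
    (S₃ : HomLeftModuleOn Ac Bset M₃)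
    (f : M₁ →ₗ[k] M₂) (g : M₂ →ₗ[k] M₃),
    IsHomModuleOnHomL Ac Bset S₁ S₂ f → IsHomModuleOnHomL Ac Bset S₂ S₃ g →
    ∀ (fbar : ((A ⊗[k] M₁) ⧸ relSubL Ac.mul Ac.aut Bset S₁.act S₁.aut) →ₗ[k]
        ((A ⊗[k] M₂) ⧸ relSubL Ac.mul Ac.aut Bset S₂.act S₂.aut))
      (gbar : ((A ⊗[k] M₂) ⧸ relSubL Ac.mul Ac.aut Bset S₂.act S₂.aut) →ₗ[k]
        ((A ⊗[k] M₃) ⧸ relSubL Ac.mul Ac.aut Bset S₃.act S₃.aut)),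
      fbar ∘ₗ (relSubL Ac.mul Ac.aut Bset S₁.act S₁.aut).mkQ =
        (relSubL Ac.mul Ac.aut Bset S₂.act S₂.aut).mkQ ∘ₗ TensorProduct.map LinearMap.id f →
      gbar ∘ₗ (relSubL Ac.mul Ac.aut Bset S₂.act S₂.aut).mkQ =
        (relSubL Ac.mul Ac.aut Bset S₃.act S₃.aut).mkQ ∘ₗ TensorProduct.map LinearMap.id g →
      (LinearMap.range f = LinearMap.ker g ↔ LinearMap.range fbar = LinearMap.ker gbar)

/-- `A` is flat as a left `B`-Hom-module: `− ⊗_B A` preserves exactness. -/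
def FlatLeftOf {Hb : MonoidalHomBialgebra k H} (Ac : HomComoduleAlgebra Hb A)
    (Bset : Set A) : Prop :=
  ∀ (M₁ M₂ M₃ : Type) [AddCommGroup M₁] [Module k M₁] [AddCommGroup M₂] [Module k M₂]
    [AddCommGroup M₃] [Module k M₃]
    (S₁ : HomModuleOn Ac Bset M₁) (S₂ : HomModuleOn Ac Bset M₂) (S₃ : HomModuleOn Ac Bset M₃)
    (f : M₁ →ₗ[k] M₂) (g : M₂ →ₗ[k] M₃),
    IsHomModuleOnHomR Ac Bset S₁ S₂ f → IsHomModuleOnHomR Ac Bset S₂ S₃ g →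
    ∀ (fbar : ((M₁ ⊗[k] A) ⧸ relSubR Ac.mul Ac.aut Bset S₁.act S₁.aut) →ₗ[k]
        ((M₂ ⊗[k] A) ⧸ relSubR Ac.mul Ac.aut Bset S₂.act S₂.aut))
      (gbar : ((M₂ ⊗[k] A) ⧸ relSubR Ac.mul Ac.aut Bset S₂.act S₂.aut) →ₗ[k]
        ((M₃ ⊗[k] A) ⧸ relSubR Ac.mul Ac.aut Bset S₃.act S₃.aut)),
      fbar ∘ₗ (relSubR Ac.mul Ac.aut Bset S₁.act S₁.aut).mkQ =
        (relSubR Ac.mul Ac.aut Bset S₂.act S₂.aut).mkQ ∘ₗ TensorProduct.map f LinearMap.id →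
      gbar ∘ₗ (relSubR Ac.mul Ac.aut Bset S₂.act S₂.aut).mkQ =
        (relSubR Ac.mul Ac.aut Bset S₃.act S₃.aut).mkQ ∘ₗ TensorProduct.map g LinearMap.id →
      (LinearMap.range f = LinearMap.ker g → LinearMap.range fbar = LinearMap.ker gbar)

end


namespace St13

section
variable {k : Type} [Field k] {H : Type} [AddCommGroup H] [Module k H]

/-- Componentwise product on `H ⊗ H`. -/
noncomputable def mu2 (Hh : MonoidalHomHopf k H) : H ⊗[k] H →ₗ[k] H ⊗[k] H →ₗ[k] H ⊗[k] H :=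
  TensorProduct.map₂ Hh.mul Hh.mul

theorem mu2_tmul (Hh : MonoidalHomHopf k H) (a b c d : H) :
    mu2 Hh (a ⊗ₜ b) (c ⊗ₜ d) = Hh.mul a c ⊗ₜ Hh.mul b d := by
  simp [mu2]

theorem comul_mul' (Hh : MonoidalHomHopf k H) (a b : H) :
    Hh.comul (Hh.mul a b) = mu2 Hh (Hh.comul a) (Hh.comul b) := by
  have h := LinearMap.congr_fun Hh.comul_mul (a ⊗ₜ b)
  simp only [LinearMap.comp_apply, TensorProduct.lift.tmul, TensorProduct.map_tmul] at h
  rw [h]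
  generalize Hh.comul a = x
  generalize Hh.comul b = y
  induction x with
  | zero => simp
  | add x₁ x₂ h₁ h₂ => simp only [TensorProduct.add_tmul, map_add, h₁, h₂, LinearMap.add_apply]
  | tmul p q =>
    induction y with
    | zero => simp
    | add x₁ x₂ h₁ h₂ => simp only [TensorProduct.tmul_add, map_add, h₁, h₂]
    | tmul r s => simp [mu2_tmul]

theorem mu2_assoc (Hh : MonoidalHomHopf k H) (x y z : H ⊗[k] H) :
    mu2 Hh (TensorProduct.map Hh.aut.toLinearMap Hh.aut.toLinearMap x) (mu2 Hh y z) =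
      mu2 Hh (mu2 Hh x y) (TensorProduct.map Hh.aut.toLinearMap Hh.aut.toLinearMap z) := by
  induction x with
  | zero => simp
  | add x₁ x₂ h₁ h₂ => simp only [map_add, h₁, h₂, LinearMap.add_apply]
  | tmul p q =>
    induction y with
    | zero => simp
    | add x₁ x₂ h₁ h₂ => simp only [map_add, h₁, h₂, LinearMap.add_apply]
    | tmul r s =>
      induction z with
      | zero => simp
      | add x₁ x₂ h₁ h₂ => simp only [map_add, h₁, h₂]
      | tmul t u => simp [mu2_tmul, Hh.hom_assoc]

theorem comul_aut' (Hh : MonoidalHomHopf k H) (a : H) :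
    Hh.comul (Hh.aut a) =
      TensorProduct.map Hh.aut.toLinearMap Hh.aut.toLinearMap (Hh.comul a) :=
  LinearMap.congr_fun Hh.comul_aut a

theorem comul_aut_symm (Hh : MonoidalHomHopf k H) (a : H) :
    Hh.comul (Hh.aut.symm a) =
      TensorProduct.map Hh.aut.symm.toLinearMap Hh.aut.symm.toLinearMap (Hh.comul a) := by
  have h := comul_aut' Hh (Hh.aut.symm a)
  rw [LinearEquiv.apply_symm_apply] at h
  rw [h, ← LinearMap.comp_apply, ← TensorProduct.map_comp]
  simp

theorem S_aut (Hh : MonoidalHomHopf k H) (a : H) :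
    Hh.antipode (Hh.aut a) = Hh.aut (Hh.antipode a) :=
  LinearMap.congr_fun Hh.antipode_aut a

theorem S_aut_symm (Hh : MonoidalHomHopf k H) (a : H) :
    Hh.antipode (Hh.aut.symm a) = Hh.aut.symm (Hh.antipode a) := by
  apply Hh.aut.injective
  rw [← S_aut]; simp

theorem aut_symm_one (Hh : MonoidalHomHopf k H) : Hh.aut.symm Hh.one = Hh.one := by
  apply Hh.aut.injective
  simp [Hh.aut_one]

theorem coassoc' (Hh : MonoidalHomHopf k H) (h : H) :
    (TensorProduct.assoc k H H H).symm
      (TensorProduct.map Hh.aut.symm.toLinearMap Hh.comul (Hh.comul h)) =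
    TensorProduct.map Hh.comul Hh.aut.symm.toLinearMap (Hh.comul h) := by
  rw [LinearEquiv.symm_apply_eq]
  exact (LinearMap.congr_fun Hh.coassoc h).symm

/-- `S(α⁻¹ x) y` type map. -/
noncomputable def Q (Hh : MonoidalHomHopf k H) : H ⊗[k] H →ₗ[k] H ⊗[k] H :=
  TensorProduct.lift (mu2 Hh) ∘ₗ
    TensorProduct.map ((TensorProduct.mk k H H).flip Hh.one ∘ₗ Hh.aut.symm.toLinearMap ∘ₗ
      Hh.antipode) Hh.comul

theorem Q_comul (Hh : MonoidalHomHopf k H) (p : H) :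
    Q Hh (Hh.comul p) = Hh.one ⊗ₜ Hh.aut.symm p := by
  have e1 : Q Hh = (TensorProduct.map (TensorProduct.lift Hh.mul ∘ₗ
      TensorProduct.map Hh.antipode LinearMap.id) Hh.aut.toLinearMap ∘ₗ
      (TensorProduct.assoc k H H H).symm.toLinearMap) ∘ₗ
      TensorProduct.map Hh.aut.symm.toLinearMap Hh.comul := by
    ext x y
    simp only [Q, TensorProduct.AlgebraTensorModule.curry_apply, TensorProduct.curry_apply,
      LinearMap.comp_apply, LinearMap.restrictScalars_apply,
      TensorProduct.map_tmul, TensorProduct.lift.tmul,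
      LinearEquiv.coe_coe, LinearMap.flip_apply, TensorProduct.mk_apply]
    generalize Hh.comul y = t
    induction t with
    | zero => simp
    | add x₁ x₂ h₁ h₂ => simp only [TensorProduct.tmul_add, map_add, h₁, h₂]
    | tmul r s => simp [mu2_tmul, Hh.oneMul, S_aut_symm]
  have e2 : (TensorProduct.map (TensorProduct.lift Hh.mul ∘ₗ
      TensorProduct.map Hh.antipode LinearMap.id) Hh.aut.toLinearMap) ∘ₗ
      TensorProduct.map Hh.comul Hh.aut.symm.toLinearMap =
      TensorProduct.mk k H H Hh.one ∘ₗ (TensorProduct.lid k H).toLinearMap ∘ₗ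
        TensorProduct.map Hh.counit LinearMap.id := by
    rw [← TensorProduct.map_comp, LinearMap.comp_assoc, Hh.antipode_mul_left]
    ext x y
    simp [TensorProduct.smul_tmul]
  rw [e1, LinearMap.comp_apply, LinearMap.comp_apply, LinearEquiv.coe_coe, coassoc',
    ← LinearMap.comp_apply, e2]
  have := LinearMap.congr_fun Hh.counit_left p
  simp only [LinearMap.comp_apply] at this ⊢
  rw [this]; rfl

/-- `x ⊗ y ↦ (1 ⊗ α⁻¹ x) Δ(S y)`. -/
theorem pre_key (Hh : MonoidalHomHopf k H) (h : H) :
    (TensorProduct.lift (mu2 Hh) ∘ₗ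
      TensorProduct.map (TensorProduct.mk k H H Hh.one ∘ₗ Hh.aut.symm.toLinearMap)
        (Hh.comul ∘ₗ Hh.antipode)) (Hh.comul h) =
      Hh.antipode (Hh.aut.symm h) ⊗ₜ Hh.one := by
  set F2 : (H ⊗[k] H) ⊗[k] H →ₗ[k] H ⊗[k] H :=
    TensorProduct.lift (mu2 Hh) ∘ₗ TensorProduct.map (Q Hh)
      (TensorProduct.map Hh.aut.toLinearMap Hh.aut.toLinearMap ∘ₗ Hh.comul ∘ₗ Hh.antipode)
    with hF2
  have e1 : (TensorProduct.lift (mu2 Hh) ∘ₗ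
      TensorProduct.map (TensorProduct.mk k H H Hh.one ∘ₗ Hh.aut.symm.toLinearMap)
        (Hh.comul ∘ₗ Hh.antipode)) = F2 ∘ₗ TensorProduct.map Hh.comul Hh.aut.symm.toLinearMap := by
    apply TensorProduct.ext'
    intro x y
    simp only [hF2, LinearMap.comp_apply, TensorProduct.map_tmul, TensorProduct.lift.tmul,
      Q_comul, ← comul_aut', ← S_aut]
    simp
  rw [e1, LinearMap.comp_apply, ← coassoc']
  have e3 : F2 ∘ₗ (TensorProduct.assoc k H H H).symm.toLinearMap =
      TensorProduct.lift (mu2 Hh) ∘ₗ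
       TensorProduct.map ((TensorProduct.mk k H H).flip Hh.one ∘ₗ Hh.antipode)
        (Hh.comul ∘ₗ TensorProduct.lift Hh.mul ∘ₗ TensorProduct.map LinearMap.id Hh.antipode) := by
    apply TensorProduct.ext_threefold'
    intro x y z
    simp only [hF2, Q, LinearMap.comp_apply, LinearEquiv.coe_coe, TensorProduct.assoc_symm_tmul,
      TensorProduct.map_tmul, TensorProduct.lift.tmul, comul_mul', LinearMap.id_apply]
    rw [← mu2_assoc]
    simp [Hh.aut_one]
  have e4 : (TensorProduct.lift (mu2 Hh) ∘ₗ
       TensorProduct.map ((TensorProduct.mk k H H).flip Hh.one ∘ₗ Hh.antipode)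
        (Hh.comul ∘ₗ TensorProduct.lift Hh.mul ∘ₗ TensorProduct.map LinearMap.id Hh.antipode)) ∘ₗ
      TensorProduct.map Hh.aut.symm.toLinearMap Hh.comul =
      ((TensorProduct.mk k H H).flip Hh.one ∘ₗ Hh.antipode) ∘ₗ
        (TensorProduct.rid k H).toLinearMap ∘ₗ TensorProduct.map LinearMap.id Hh.counit := by
    apply TensorProduct.ext'
    intro x y
    have h := LinearMap.congr_fun Hh.antipode_mul_right y
    simp only [LinearMap.comp_apply, TensorProduct.map_tmul, TensorProduct.lift.tmul] at h ⊢
    rw [h]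
    simp [Hh.comul_one, mu2_tmul, Hh.mulOne, S_aut_symm, Hh.aut_one]
  have e3' := LinearMap.congr_fun e3
    (TensorProduct.map Hh.aut.symm.toLinearMap Hh.comul (Hh.comul h))
  have e4' := LinearMap.congr_fun e4 (Hh.comul h)
  have e5 := LinearMap.congr_fun Hh.counit_right h
  simp only [LinearMap.comp_apply, LinearEquiv.coe_coe] at e3' e4' e5 ⊢
  rw [e3', e4', e5]
  simp

/-- `t ↦ (1 ⊗ y) (id ⊗ α) t`. -/
noncomputable def W (Hh : MonoidalHomHopf k H) : H →ₗ[k] H ⊗[k] H →ₗ[k] H ⊗[k] H :=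
  (LinearMap.lTensorHom H) ∘ₗ (Hh.mul.compl₂ Hh.aut.toLinearMap)

theorem W_tmul (Hh : MonoidalHomHopf k H) (y a b : H) :
    W Hh y (a ⊗ₜ b) = a ⊗ₜ Hh.mul y (Hh.aut b) := by
  simp [W]

theorem key (Hh : MonoidalHomHopf k H) (h : H) :
    (TensorProduct.lift (W Hh) ∘ₗ TensorProduct.map LinearMap.id
        (Hh.comul ∘ₗ Hh.antipode)) (Hh.comul h) =
      Hh.antipode (Hh.aut.symm (Hh.aut.symm h)) ⊗ₜ Hh.one := by
  have e : (TensorProduct.lift (W Hh) ∘ₗ TensorProduct.map LinearMap.id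
        (Hh.comul ∘ₗ Hh.antipode)) =
      TensorProduct.map Hh.aut.symm.toLinearMap Hh.aut.toLinearMap ∘ₗ
      (TensorProduct.lift (mu2 Hh) ∘ₗ
      TensorProduct.map (TensorProduct.mk k H H Hh.one ∘ₗ Hh.aut.symm.toLinearMap)
        (Hh.comul ∘ₗ Hh.antipode)) := by
    apply TensorProduct.ext'
    intro x y
    simp only [LinearMap.comp_apply, TensorProduct.map_tmul, TensorProduct.lift.tmul]
    generalize Hh.comul (Hh.antipode y) = t
    induction t with
    | zero => simp
    | add x₁ x₂ h₁ h₂ => simp only [map_add, h₁, h₂]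
    | tmul r s => simp [mu2_tmul, W_tmul, Hh.oneMul, Hh.aut_mul]
  rw [e, LinearMap.comp_apply, pre_key]
  simp [S_aut_symm, Hh.aut_one]

end
end St13

/-! STATEMENT 13: Given a colinear retraction `λ_A` of `ρ_A`, the map
`f(n⊗(a⊗h)) = ν(n₍₀₎)·λ_A(a ⊗ S(α⁻¹(n₍₁₎))α⁻¹(h))` is a surjective right
(H,α)-colinear map `N⊗(A⊗H) → N`. -/
theorem statement13
    (k : Type) [Field k] (H : Type) [AddCommGroup H] [Module k H]
    (Hh : MonoidalHomHopf k H)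
    (Sinv : H →ₗ[k] H)
    (hSinv₁ : Sinv ∘ₗ Hh.antipode = LinearMap.id)
    (hSinv₂ : Hh.antipode ∘ₗ Sinv = LinearMap.id)
    (A : Type) [AddCommGroup A] [Module k A]
    (Ac : HomComoduleAlgebra Hh.toMonoidalHomBialgebra A)
    -- λ_A is a right (H,α)-colinear retraction of ρ_A
    (lamA : A ⊗[k] H →ₗ[k] A)
    (hlam₁ : lamA ∘ₗ Ac.coact = LinearMap.id)
    (hlam₂ : lamA ∘ₗ (TensorProduct.map Ac.aut.toLinearMap Hh.aut.toLinearMap) =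
      Ac.aut.toLinearMap ∘ₗ lamA)
    (hlam₃ : Ac.coact ∘ₗ lamA =
      (TensorProduct.map lamA LinearMap.id) ∘ₗ
        (TensorProduct.map LinearMap.id Hh.aut.toLinearMap) ∘ₗ
          (TensorProduct.assoc k A H H).symm.toLinearMap ∘ₗ
            (TensorProduct.map Ac.aut.symm.toLinearMap Hh.comul))
    (N : Type) [AddCommGroup N] [Module k N]
    (P : HomHopfModule Ac N)
    (f : N ⊗[k] (A ⊗[k] H) →ₗ[k] N)
    -- f(n⊗(a⊗h)) = ν(n₍₀₎)·λ_A(a ⊗ S(α⁻¹(n₍₁₎))·α⁻¹(h))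
    (hfdef : f =
      (TensorProduct.lift P.act) ∘ₗ
        (TensorProduct.map P.aut.toLinearMap lamA) ∘ₗ
          (TensorProduct.assoc k N A H).toLinearMap ∘ₗ
            (TensorProduct.map LinearMap.id
              ((TensorProduct.lift Hh.mul) ∘ₗ
                (TensorProduct.map (Hh.antipode ∘ₗ Hh.aut.symm.toLinearMap)
                  Hh.aut.symm.toLinearMap))) ∘ₗ
              (TensorProduct.tensorTensorTensorComm k N H A H).toLinearMap ∘ₗ
                (TensorProduct.map P.coact LinearMap.id))
    -- the Hom-comodule structure on N⊗(A⊗H):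
    -- n⊗(a⊗h) ↦ (ν⁻¹(n)⊗(β⁻¹(a)⊗h₁)) ⊗ α²(h₂)
    (ρX : N ⊗[k] (A ⊗[k] H) →ₗ[k] (N ⊗[k] (A ⊗[k] H)) ⊗[k] H)
    (hρX : ρX =
      (TensorProduct.map LinearMap.id (Hh.aut.toLinearMap ∘ₗ Hh.aut.toLinearMap)) ∘ₗ
        (TensorProduct.assoc k N (A ⊗[k] H) H).symm.toLinearMap ∘ₗ
          (TensorProduct.map P.aut.symm.toLinearMap
            ((TensorProduct.assoc k A H H).symm.toLinearMap ∘ₗ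
              (TensorProduct.map Ac.aut.symm.toLinearMap Hh.comul)))) :
    -- f is split surjective: f(n₍₀₎ ⊗ (1_A ⊗ α⁻¹(n₍₁₎))) = n
    (∀ n : N,
        f ((TensorProduct.map LinearMap.id
            ((TensorProduct.mk k A H Ac.one) ∘ₗ Hh.aut.symm.toLinearMap)) (P.coact n)) = n) ∧
    Function.Surjective f ∧
    -- f is right (H,α)-colinear
    P.coact ∘ₗ f = (TensorProduct.map f LinearMap.id) ∘ₗ ρX ∧
    f ∘ₗ (TensorProduct.congr P.aut (TensorProduct.congr Ac.aut Hh.aut)).toLinearMap =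
      P.aut.toLinearMap ∘ₗ f := by
  -- pointwise description of `f`
  have hf : ∀ (n : N) (a : A) (h : H), f (n ⊗ₜ (a ⊗ₜ h)) =
      (TensorProduct.lift P.act ∘ₗ TensorProduct.map P.aut.toLinearMap
        (lamA ∘ₗ TensorProduct.mk k A H a ∘ₗ Hh.mul.flip (Hh.aut.symm h) ∘ₗ Hh.antipode ∘ₗ
          Hh.aut.symm.toLinearMap)) (P.coact n) := by
    intro n a h
    simp only [hfdef, LinearMap.comp_apply, TensorProduct.map_tmul, LinearMap.id_apply]
    generalize P.coact n = t
    induction t with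
    | zero => simp
    | add x₁ x₂ h₁ h₂ => simp only [TensorProduct.add_tmul, map_add, h₁, h₂]
    | tmul r s => simp
  have hcoN : ∀ n : N, (TensorProduct.assoc k N H H).symm
      (TensorProduct.map P.aut.symm.toLinearMap Hh.comul (P.coact n)) =
      TensorProduct.map P.coact Hh.aut.symm.toLinearMap (P.coact n) := by
    intro n
    rw [LinearEquiv.symm_apply_eq]
    exact LinearMap.congr_fun P.coassoc n
  have hcounit : ∀ n : N, (TensorProduct.rid k N)
      (TensorProduct.map LinearMap.id Hh.counit (P.coact n)) = P.aut.symm n := fun n =>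
    LinearMap.congr_fun P.counit n
  have hlam_one : lamA (Ac.one ⊗ₜ Hh.one) = Ac.one := by
    rw [← Ac.coact_one]
    exact LinearMap.congr_fun hlam₁ Ac.one
  have hsplit : ∀ n : N,
        f ((TensorProduct.map LinearMap.id
            ((TensorProduct.mk k A H Ac.one) ∘ₗ Hh.aut.symm.toLinearMap)) (P.coact n)) = n := by
    intro n
    set F : (N ⊗[k] H) ⊗[k] H →ₗ[k] N :=
      TensorProduct.lift P.act ∘ₗ TensorProduct.map P.aut.toLinearMap
        (lamA ∘ₗ TensorProduct.mk k A H Ac.one ∘ₗ Hh.aut.symm.toLinearMap ∘ₗ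
          TensorProduct.lift Hh.mul ∘ₗ TensorProduct.map Hh.antipode LinearMap.id) ∘ₗ
        (TensorProduct.assoc k N H H).toLinearMap with hF
    have e1 : f ∘ₗ TensorProduct.map LinearMap.id
        ((TensorProduct.mk k A H Ac.one) ∘ₗ Hh.aut.symm.toLinearMap) =
        F ∘ₗ TensorProduct.map P.coact Hh.aut.symm.toLinearMap := by
      apply TensorProduct.ext'
      intro m x
      simp only [LinearMap.comp_apply, TensorProduct.map_tmul, LinearMap.id_apply,
        TensorProduct.mk_apply, hf, hF]
      generalize P.coact m = t
      induction t with
      | zero => simp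
      | add x₁ x₂ h₁ h₂ => simp only [TensorProduct.add_tmul, map_add, h₁, h₂]
      | tmul r s =>
        have : ∀ p q : H, Hh.aut.symm (Hh.mul p q) = Hh.mul (Hh.aut.symm p) (Hh.aut.symm q) := by
          intro p q
          apply Hh.aut.injective
          simp [Hh.aut_mul]
        simp [this, St13.S_aut_symm]
    have e2 : (F ∘ₗ (TensorProduct.assoc k N H H).symm.toLinearMap) ∘ₗ
        TensorProduct.map P.aut.symm.toLinearMap Hh.comul =
        P.aut.toLinearMap ∘ₗ (TensorProduct.rid k N).toLinearMap ∘ₗ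
          TensorProduct.map LinearMap.id Hh.counit := by
      apply TensorProduct.ext'
      intro m x
      have h := LinearMap.congr_fun Hh.antipode_mul_left x
      simp only [LinearMap.comp_apply] at h
      simp only [hF, LinearMap.comp_apply, TensorProduct.map_tmul, LinearEquiv.coe_coe,
        LinearEquiv.apply_symm_apply, h]
      simp [St13.aut_symm_one, hlam_one, P.act_one]
    have e1' := LinearMap.congr_fun e1 (P.coact n)
    have e2' := LinearMap.congr_fun e2 (P.coact n)
    simp only [LinearMap.comp_apply, LinearEquiv.coe_coe] at e1' e2'
    rw [e1', ← hcoN, e2', hcounit]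
    simp
  refine ⟨hsplit, fun n => ⟨_, hsplit n⟩, ?_, ?_⟩
  · apply TensorProduct.ext_threefold'
    intro n a h
    -- the componentwise action
    set muN : N ⊗[k] H →ₗ[k] A ⊗[k] H →ₗ[k] N ⊗[k] H := TensorProduct.map₂ P.act Hh.mul with hmuN
    have muN_tmul : ∀ (m : N) (x : H) (b : A) (y : H),
        muN (m ⊗ₜ x) (b ⊗ₜ y) = P.act m b ⊗ₜ Hh.mul x y := by
      intro m x b y
      simp [hmuN]
    have hcompat : ∀ (m : N) (b : A), P.coact (P.act m b) = muN (P.coact m) (Ac.coact b) := by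
      intro m b
      have h := LinearMap.congr_fun P.compat (m ⊗ₜ b)
      simp only [LinearMap.comp_apply, TensorProduct.lift.tmul, TensorProduct.map_tmul] at h
      rw [h]
      generalize P.coact m = x
      generalize Ac.coact b = y
      induction x with
      | zero => simp
      | add x₁ x₂ h₁ h₂ =>
        simp only [TensorProduct.add_tmul, map_add, h₁, h₂, LinearMap.add_apply]
      | tmul p q =>
        induction y with
        | zero => simp
        | add x₁ x₂ h₁ h₂ => simp only [TensorProduct.tmul_add, map_add, h₁, h₂]
        | tmul r s => simp [muN_tmul]
    set Lam : H ⊗[k] H →ₗ[k] A ⊗[k] H :=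
      TensorProduct.map (lamA ∘ₗ TensorProduct.mk k A H (Ac.aut.symm a)) Hh.aut.toLinearMap
      with hLam
    have hcolam : ∀ m : H, Ac.coact (lamA (a ⊗ₜ m)) = Lam (Hh.comul m) := by
      intro m
      have h := LinearMap.congr_fun hlam₃ (a ⊗ₜ m)
      simp only [LinearMap.comp_apply, TensorProduct.map_tmul] at h
      rw [h]
      generalize Hh.comul m = y
      induction y with
      | zero => simp
      | add x₁ x₂ h₁ h₂ => simp only [TensorProduct.tmul_add, map_add, h₁, h₂]
      | tmul r s => simp [hLam]
    have hcoaut : ∀ m : N, P.coact (P.aut m) =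
        TensorProduct.map P.aut.toLinearMap Hh.aut.toLinearMap (P.coact m) := fun m =>
      LinearMap.congr_fun P.coact_aut m
    set D : H ⊗[k] H :=
      TensorProduct.map Hh.aut.symm.toLinearMap Hh.aut.symm.toLinearMap (Hh.comul h) with hD
    set F : (N ⊗[k] H) ⊗[k] H →ₗ[k] N ⊗[k] H :=
      TensorProduct.lift muN ∘ₗ TensorProduct.map
        (TensorProduct.map P.aut.toLinearMap Hh.aut.toLinearMap)
        (Lam ∘ₗ (St13.mu2 Hh).flip D ∘ₗ Hh.comul ∘ₗ Hh.antipode) with hF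
    have e1 : P.coact ∘ₗ (TensorProduct.lift P.act ∘ₗ TensorProduct.map P.aut.toLinearMap
        (lamA ∘ₗ TensorProduct.mk k A H a ∘ₗ Hh.mul.flip (Hh.aut.symm h) ∘ₗ Hh.antipode ∘ₗ
          Hh.aut.symm.toLinearMap)) = F ∘ₗ TensorProduct.map P.coact Hh.aut.symm.toLinearMap := by
      apply TensorProduct.ext'
      intro m x
      simp only [hF, LinearMap.comp_apply, TensorProduct.map_tmul, TensorProduct.lift.tmul,
        LinearEquiv.coe_coe, hcompat, hcoaut, TensorProduct.mk_apply, LinearMap.flip_apply,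
        hcolam, St13.comul_mul', St13.comul_aut_symm Hh h, ← hD]
    -- the answer, as a bilinear expression
    set G : N ⊗[k] H →ₗ[k] N ⊗[k] H :=
      TensorProduct.lift muN ∘ₗ TensorProduct.map
        ((TensorProduct.mk k N H).flip Hh.one)
        (TensorProduct.map (lamA ∘ₗ TensorProduct.mk k A H (Ac.aut.symm a))
          (Hh.aut.toLinearMap ∘ₗ Hh.aut.toLinearMap) ∘ₗ
          (LinearMap.rTensorHom H ∘ₗ Hh.mul).flip D ∘ₗ Hh.antipode ∘ₗ Hh.aut.symm.toLinearMap ∘ₗ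
            Hh.aut.symm.toLinearMap) with hG
    have e2 : (F ∘ₗ (TensorProduct.assoc k N H H).symm.toLinearMap) ∘ₗ
        TensorProduct.map P.aut.symm.toLinearMap Hh.comul = G := by
      apply TensorProduct.ext'
      intro m x
      -- the auxiliary map `u ⊗ w ↦ (p ⊗ q ↦ m · λ(β⁻¹ a ⊗ u p) ⊗ w α²(q))`
      set J : H ⊗[k] H →ₗ[k] H ⊗[k] H →ₗ[k] N ⊗[k] H :=
        TensorProduct.map₂ (Hh.mul.compr₂ (P.act m ∘ₗ lamA ∘ₗ TensorProduct.mk k A H (Ac.aut.symm a)))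
          (Hh.mul.compl₂ (Hh.aut.toLinearMap ∘ₗ Hh.aut.toLinearMap)) with hJ
      have hk := St13.key Hh x
      have s1 : ((F ∘ₗ (TensorProduct.assoc k N H H).symm.toLinearMap) ∘ₗ
          TensorProduct.mk k N (H ⊗[k] H) (P.aut.symm m)) =
          J.flip D ∘ₗ (TensorProduct.lift (St13.W Hh) ∘ₗ TensorProduct.map LinearMap.id
            (Hh.comul ∘ₗ Hh.antipode)) := by
        apply TensorProduct.ext'
        intro y z
        simp only [hF, LinearMap.comp_apply, TensorProduct.map_tmul, TensorProduct.lift.tmul,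
          LinearEquiv.coe_coe, TensorProduct.mk_apply, LinearMap.flip_apply,
          TensorProduct.assoc_symm_tmul, LinearEquiv.apply_symm_apply, LinearMap.id_apply]
        generalize Hh.comul (Hh.antipode z) = t
        generalize D = d
        induction t with
        | zero => simp
        | add x₁ x₂ h₁ h₂ => simp only [map_add, h₁, h₂, LinearMap.add_apply]
        | tmul u v =>
          induction d with
          | zero => simp
          | add x₁ x₂ h₁ h₂ => simp only [map_add, h₁, h₂]
          | tmul p q =>
            simp [hJ, hLam, St13.mu2_tmul, muN_tmul, St13.W_tmul, Hh.aut_mul, Hh.hom_assoc]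
      have s1' := LinearMap.congr_fun s1 (Hh.comul x)
      rw [LinearMap.comp_apply (J.flip D), hk] at s1'
      refine Eq.trans s1' ?_
      simp only [hG, LinearMap.comp_apply, TensorProduct.map_tmul, TensorProduct.lift.tmul,
          LinearEquiv.coe_coe, TensorProduct.mk_apply, LinearMap.flip_apply]
      generalize D = d
      induction d with
      | zero => simp
      | add x₁ x₂ h₁ h₂ => simp only [map_add, h₁, h₂]
      | tmul p q => simp [hJ, muN_tmul]
    have e1' := LinearMap.congr_fun e1 (P.coact n)
    have e2' := LinearMap.congr_fun e2 (P.coact n)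
    rw [LinearMap.comp_apply, hf]
    refine e1'.trans ?_
    rw [LinearMap.comp_apply, ← hcoN]
    refine e2'.trans ?_
    have hns : P.coact (P.aut.symm n) =
        TensorProduct.map P.aut.symm.toLinearMap Hh.aut.symm.toLinearMap (P.coact n) := by
      have h' := hcoaut (P.aut.symm n)
      rw [LinearEquiv.apply_symm_apply] at h'
      rw [h', ← LinearMap.comp_apply, ← TensorProduct.map_comp]
      simp
    simp only [hρX, hG, hD, LinearMap.comp_apply, TensorProduct.map_tmul, LinearEquiv.coe_coe]
    generalize Hh.comul h = d
    induction d with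
    | zero => simp
    | add x₁ x₂ h₁ h₂ =>
      simp only [TensorProduct.tmul_add, map_add, LinearMap.comp_add, TensorProduct.map_add_right,
        LinearMap.add_apply, LinearMap.add_comp, h₁, h₂]
    | tmul p q =>
      simp only [TensorProduct.map_tmul, LinearEquiv.coe_coe, TensorProduct.assoc_symm_tmul,
        LinearMap.id_apply, hf, hns, LinearMap.comp_apply]
      generalize P.coact n = t
      induction t with
      | zero => simp
      | add x₁ x₂ h₁ h₂ => simp only [map_add, TensorProduct.add_tmul, h₁, h₂]
      | tmul m x => simp [muN_tmul, Hh.oneMul]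
  · apply TensorProduct.ext_threefold'
    intro n a h
    have hcoaut : P.coact (P.aut n) =
        TensorProduct.map P.aut.toLinearMap Hh.aut.toLinearMap (P.coact n) :=
      LinearMap.congr_fun P.coact_aut n
    have hl : ∀ (b : A) (x : H), lamA (Ac.aut b ⊗ₜ Hh.aut x) = Ac.aut (lamA (b ⊗ₜ x)) :=
      fun b x => LinearMap.congr_fun hlam₂ (b ⊗ₜ x)
    simp only [LinearMap.comp_apply, LinearEquiv.coe_coe, TensorProduct.congr_tmul, hf, hcoaut]
    generalize P.coact n = t
    induction t with
    | zero => simp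
    | add x₁ x₂ h₁ h₂ => simp only [map_add, h₁, h₂]
    | tmul m x =>
      simp [P.aut_act, ← hl, Hh.aut_mul, ← St13.S_aut]
end

section
/- Let (H,α) be a monoidal Hom-Hopf algebra with bijective antipode S, (A,β) a right (H,α)-Hom-comodule algebra, B=A^{coH}. If the canonical map can: A⊗_B A→A⊗H is surjective and there exists a total integral φ:H→A, then the adjoint pair (F,G) is a pair of inverse equivalences between right (B,β|_B)-Hom-modules and right (H,A)-Hom-Hopf modules; that is, for every right B-Hom-module (M,μ) the unit η_M: M→(M⊗_B A)^{coH}, m↦μ⁻¹(m)⊗1_A, is bijective, and for every right (H,A)-Hom-Hopf module (N,ν) the counit ε_N: N^{coH}⊗_B A→N, n⊗a↦n·a, is bijective. -/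
open TensorProduct

noncomputable section

section HopfCore
open TensorProduct Coalgebra HopfAlgebra

variable {k H A N V : Type} [Field k] [Ring H] [HopfAlgebra k H] [Ring A] [Algebra k A]
  [AddCommGroup N] [Module k N] [AddCommGroup V] [Module k V]

/-- Ordinary right comodules. -/
structure OrdComod (ρ : N →ₗ[k] N ⊗[k] H) : Prop where
  coassoc : ∀ n, TensorProduct.assoc k N H H (LinearMap.rTensor H ρ (ρ n)) =
    LinearMap.lTensor N comul (ρ n)
  counit : ∀ n, TensorProduct.rid k N (LinearMap.lTensor N counit (ρ n)) = n

theorem fourfold {ρ : N →ₗ[k] N ⊗[k] H} (hρ : OrdComod ρ)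
    (L : (N ⊗[k] H) ⊗[k] (H ⊗[k] H) →ₗ[k] V) (L' : N ⊗[k] H →ₗ[k] V)
    (h : ∀ n x z, L ((TensorProduct.assoc k N H (H ⊗[k] H)).symm
      (n ⊗ₜ TensorProduct.assoc k H H H (comul x ⊗ₜ z))) = counit (R := k) x • L' (n ⊗ₜ z)) (n : N) :
    L (TensorProduct.map ρ comul (ρ n)) = L' (ρ n) := by
  have e1 : TensorProduct.map ρ comul (ρ n) = (TensorProduct.assoc k N H (H ⊗[k] H)).symm
      (LinearMap.lTensor N ((TensorProduct.assoc k H H H).toLinearMap ∘ₗ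
        LinearMap.rTensor H comul ∘ₗ comul) (ρ n)) := by
    rw [Coalgebra.coassoc, LinearMap.lTensor_comp, LinearMap.comp_apply, ← hρ.coassoc]
    have e0 : (TensorProduct.assoc k N H (H ⊗[k] H)).symm.toLinearMap ∘ₗ
        LinearMap.lTensor N (LinearMap.lTensor H comul) ∘ₗ
        (TensorProduct.assoc k N H H).toLinearMap = LinearMap.lTensor (N ⊗[k] H) comul := by
      ext; simp
    have e0' := LinearMap.congr_fun e0 (LinearMap.rTensor H ρ (ρ n))
    simp only [LinearMap.comp_apply, LinearEquiv.coe_coe] at e0'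
    rw [e0', ← LinearMap.lTensor_comp_rTensor]
    rfl
  have e2 : L ∘ₗ (TensorProduct.assoc k N H (H ⊗[k] H)).symm.toLinearMap ∘ₗ
      LinearMap.lTensor N ((TensorProduct.assoc k H H H).toLinearMap ∘ₗ
        LinearMap.rTensor H comul) =
      L' ∘ₗ LinearMap.lTensor N ((TensorProduct.lid k H).toLinearMap ∘ₗ
        LinearMap.rTensor H counit) := by
    ext n x z
    simpa using h n x z
  rw [e1]
  have e3 := LinearMap.congr_fun e2 (LinearMap.lTensor N comul (ρ n))
  simp only [LinearMap.comp_apply, ← LinearMap.lTensor_comp_apply, LinearEquiv.coe_coe] at e3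
  rw [LinearMap.comp_assoc] at e3
  rw [e3, LinearMap.comp_assoc, Coalgebra.rTensor_counit_comp_comul]
  congr 1
  have : (TensorProduct.lid k H).toLinearMap ∘ₗ (TensorProduct.mk k k H) 1 = LinearMap.id := by
    ext; simp
  rw [this]; simp

theorem threefold {ρ : N →ₗ[k] N ⊗[k] H} (hρ : OrdComod ρ)
    (L : (N ⊗[k] H) ⊗[k] H →ₗ[k] V) (L' : N →ₗ[k] V)
    (h : ∀ n x, L ((TensorProduct.assoc k N H H).symm
      (n ⊗ₜ comul x)) = counit (R := k) x • L' n) (n : N) :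
    L (LinearMap.rTensor H ρ (ρ n)) = L' n := by
  have e1 : LinearMap.rTensor H ρ (ρ n) = (TensorProduct.assoc k N H H).symm
    (LinearMap.lTensor N comul (ρ n)) := by
    rw [← hρ.coassoc]; simp
  have e2 : L ∘ₗ (TensorProduct.assoc k N H H).symm.toLinearMap ∘ₗ
      LinearMap.lTensor N comul =
      L' ∘ₗ (TensorProduct.rid k N).toLinearMap ∘ₗ LinearMap.lTensor N counit := by
    ext n x
    simpa using h n x
  rw [e1]
  have e3 := LinearMap.congr_fun e2 (ρ n)
  simp only [LinearMap.comp_apply, LinearEquiv.coe_coe] at e3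
  rw [e3, hρ.counit]

theorem ordComod_self : OrdComod (comul : H →ₗ[k] H ⊗[k] H) :=
  ⟨fun n => Coalgebra.coassoc_apply n, fun n => by simp⟩

theorem comul_antipode (x : H) : comul (R := k) (antipode k x) =
    TensorProduct.comm k H H (TensorProduct.map (antipode k) (antipode k) (comul x)) := by
  let D : WithConv (H →ₗ[k] H ⊗[k] H) := WithConv.toConv comul
  let P : WithConv (H →ₗ[k] H ⊗[k] H) := WithConv.toConv (comul ∘ₗ antipode k)
  let Q : WithConv (H →ₗ[k] H ⊗[k] H) := WithConv.toConv
    ((TensorProduct.comm k H H).toLinearMap ∘ₗ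
      TensorProduct.map (antipode k) (antipode k) ∘ₗ comul)
  have hPD : P * D = 1 := by
    have := LinearMap.algHom_comp_convMul_distrib (R := k) (Bialgebra.comulAlgHom k H)
      (WithConv.toConv (antipode k)) (WithConv.toConv LinearMap.id)
    rw [LinearMap.antipode_mul_id] at this
    apply WithConv.ofConv_injective
    refine Eq.trans this.symm ?_
    ext y
    simp [LinearMap.convOne_def, Algebra.algebraMap_eq_smul_one]
  have hDQ : D * Q = 1 := by
    apply WithConv.ofConv_injective
    ext y
    let L : (H ⊗[k] H) ⊗[k] (H ⊗[k] H) →ₗ[k] H ⊗[k] H :=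
      LinearMap.mul' k (H ⊗[k] H) ∘ₗ LinearMap.lTensor (H ⊗[k] H)
       ((TensorProduct.comm k H H).toLinearMap ∘ₗ TensorProduct.map (antipode k) (antipode k))
    let L' : H ⊗[k] H →ₗ[k] H ⊗[k] H :=
      (TensorProduct.mk k H H).flip 1 ∘ₗ LinearMap.mul' k H ∘ₗ LinearMap.lTensor H (antipode k)
    have key := fourfold (k := k) (ordComod_self (k := k) (H := H)) L L' (by
      intro n x z
      have : ∀ w : H ⊗[k] H, L ((TensorProduct.assoc k H H (H ⊗[k] H)).symm
          (n ⊗ₜ TensorProduct.assoc k H H H (w ⊗ₜ z))) =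
          (n * antipode k z) ⊗ₜ LinearMap.mul' k H (LinearMap.lTensor H (antipode k) w) := by
        intro w
        induction w with
        | zero => simp
        | tmul a b => simp [L]
        | add a b ha hb => simp only [map_add, ha, hb, add_tmul, tmul_add]
      rw [this]
      simp [L', Algebra.algebraMap_eq_smul_one]) y
    have l1 : (D * Q).ofConv y = L (TensorProduct.map comul comul (comul (R := k) y)) := by
      simp only [L, D, Q, LinearMap.convMul_def, LinearMap.comp_apply]
      congr 1
      rw [← LinearMap.comp_apply (LinearMap.lTensor _ _), LinearMap.lTensor_comp_map]
      rfl
    rw [l1, key]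
    simp [L', LinearMap.convOne_def, Algebra.algebraMap_eq_smul_one, smul_tmul']
    rfl
  have := left_inv_eq_right_inv hPD hDQ
  exact LinearMap.congr_fun (congrArg WithConv.ofConv this) x

theorem antipode_surj_inv (S' : H →ₗ[k] H) (h1 : ∀ x, S' (antipode k x) = x)
   (h2 : ∀ x, antipode k (S' x) = x) (x : H) : comul (R := k) (S' x) =
    TensorProduct.comm k H H (TensorProduct.map S' S' (comul x)) := by
  have e : TensorProduct.map S' S' ∘ₗ TensorProduct.map (antipode k) (antipode k) =
    (LinearMap.id : H ⊗[k] H →ₗ[k] H ⊗[k] H) := by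
    ext a b; simp [h1]
  have := comul_antipode (k := k) (S' x)
  rw [h2] at this
  rw [this]
  have e' := LinearMap.congr_fun e (comul (S' x))
  simp only [LinearMap.comp_apply, LinearMap.id_apply] at e'
  conv_lhs => rw [← e']
  generalize TensorProduct.map (antipode k) (antipode k) (comul (S' x)) = w
  induction w with
  | zero => simp
  | tmul a b => simp
  | add a b ha hb => simp only [map_add, ha, hb]


/-- Ordinary relative Hopf modules. -/
structure OrdHopf (ρA : A →ₐ[k] A ⊗[k] H) (ρ : N →ₗ[k] N ⊗[k] H) (act : N →ₗ[k] A →ₗ[k] N) :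
    Prop where
  com : OrdComod ρ
  act_act : ∀ n a b, act (act n a) b = act n (a * b)
  act_one : ∀ n, act n 1 = n
  compat : ∀ n a, ρ (act n a) = TensorProduct.map₂ act (LinearMap.mul k H) (ρ n) (ρA a)

theorem map₂_mul_mul (x y : A ⊗[k] H) :
    TensorProduct.map₂ (LinearMap.mul k A) (LinearMap.mul k H) x y = x * y := by
  have : TensorProduct.map₂ (LinearMap.mul k A) (LinearMap.mul k H) =
    LinearMap.mul k (A ⊗[k] H) := by
    ext; simp
  rw [this]; rfl

theorem ordHopf_self {ρA : A →ₐ[k] A ⊗[k] H} (h : OrdComod ρA.toLinearMap) :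
    OrdHopf ρA ρA.toLinearMap (LinearMap.mul k A) :=
  ⟨h, fun n a b => mul_assoc n a b, fun n => mul_one n, fun n a => by
    rw [map₂_mul_mul]; simp⟩

/-- `n ↦ n₀ · g (S n₁)` -/
def trMap (ρ : N →ₗ[k] N ⊗[k] H) (act : N →ₗ[k] A →ₗ[k] N) (g : H →ₗ[k] A) : N →ₗ[k] N :=
  TensorProduct.lift act ∘ₗ LinearMap.lTensor N (g ∘ₗ antipode k) ∘ₗ ρ

theorem trMap_coinv {ρA : A →ₐ[k] A ⊗[k] H} {ρ : N →ₗ[k] N ⊗[k] H} {act : N →ₗ[k] A →ₗ[k] N}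
    (hN : OrdHopf ρA ρ act) (g : H →ₗ[k] A)
    (hg : ∀ x, ρA (g x) = LinearMap.rTensor H g (comul x)) (n : N) :
    ρ (trMap ρ act g n) = trMap ρ act g n ⊗ₜ 1 := by
  let L : (N ⊗[k] H) ⊗[k] (H ⊗[k] H) →ₗ[k] N ⊗[k] H :=
    TensorProduct.lift (TensorProduct.map₂ act (LinearMap.mul k H)) ∘ₗ
      LinearMap.lTensor (N ⊗[k] H) (LinearMap.rTensor H g ∘ₗ
        (TensorProduct.comm k H H).toLinearMap ∘ₗ TensorProduct.map (antipode k) (antipode k))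
  let L' : N ⊗[k] H →ₗ[k] N ⊗[k] H :=
    (TensorProduct.mk k N H).flip 1 ∘ₗ TensorProduct.lift act ∘ₗ
      LinearMap.lTensor N (g ∘ₗ antipode k)
  have e : ρ ∘ₗ TensorProduct.lift act ∘ₗ LinearMap.lTensor N (g ∘ₗ antipode k) =
      L ∘ₗ TensorProduct.map ρ comul := by
    ext n x
    simp [L, hN.compat, hg, comul_antipode]
  have key := fourfold hN.com L L' (by
      intro n x z
      have : ∀ w : H ⊗[k] H, L ((TensorProduct.assoc k N H (H ⊗[k] H)).symm
          (n ⊗ₜ TensorProduct.assoc k H H H (w ⊗ₜ z))) =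
          (act n (g (antipode k z))) ⊗ₜ
            LinearMap.mul' k H (LinearMap.lTensor H (antipode k) w) := by
        intro w
        induction w with
        | zero => simp
        | tmul a b => simp [L]
        | add a b ha hb => simp only [map_add, ha, hb, add_tmul, tmul_add]
      rw [this]
      simp [L', Algebra.algebraMap_eq_smul_one]) n
  have e' := LinearMap.congr_fun e (ρ n)
  simp only [LinearMap.comp_apply] at e'
  simp only [trMap, LinearMap.comp_apply]
  rw [e', key]
  simp [L']

theorem trMap_act {ρA : A →ₐ[k] A ⊗[k] H} {ρ : N →ₗ[k] N ⊗[k] H} {act : N →ₗ[k] A →ₗ[k] N}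
    (hN : OrdHopf ρA ρ act) (g : H →ₗ[k] A) (m : N) (hm : ρ m = m ⊗ₜ 1) (a : A) :
    trMap ρ act g (act m a) = act m (trMap ρA.toLinearMap (LinearMap.mul k A) g a) := by
  have : ∀ w : A ⊗[k] H, TensorProduct.lift act (LinearMap.lTensor N (g ∘ₗ antipode k)
    (TensorProduct.map₂ act (LinearMap.mul k H) (m ⊗ₜ 1) w)) =
    act m (TensorProduct.lift (LinearMap.mul k A) (LinearMap.lTensor A (g ∘ₗ antipode k) w)) := by
    intro w
    induction w with
    | zero => simp
    | tmul a b => simp [hN.act_act]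
    | add a b ha hb => simp only [map_add, ha, hb]
  simp only [trMap, LinearMap.comp_apply, hN.compat, hm]
  rw [this]; rfl

theorem skew_antipode (S' : H →ₗ[k] H) (h1 : ∀ x, S' (antipode k x) = x)
   (h2 : ∀ x, antipode k (S' x) = x) (x : H) :
   LinearMap.mul' k H (TensorProduct.map S' LinearMap.id (TensorProduct.comm k H H (comul x))) =
    counit (R := k) x • (1 : H) := by
  have e : ∀ w : H ⊗[k] H, antipode k
      (LinearMap.mul' k H (TensorProduct.map S' LinearMap.id (TensorProduct.comm k H H w))) =
      LinearMap.mul' k H (LinearMap.rTensor H (antipode k) w) := by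
    intro w
    induction w with
    | zero => simp
    | tmul a b => simp [antipode_mul_antidistrib, h2]
    | add a b ha hb => simp only [map_add, ha, hb]
  rw [← h1 (LinearMap.mul' k H _), e, mul_antipode_rTensor_comul_apply,
    Algebra.algebraMap_eq_smul_one, map_smul]
  congr 1
  conv_lhs => rw [← antipode_one (R := k) (A := H), h1]

/-- Auxiliary map built from the integral. -/
def kMap (φ : H →ₗ[k] A) (S' : H →ₗ[k] H) : A ⊗[k] H →ₗ[k] H →ₗ[k] A :=
  TensorProduct.lift (LinearMap.mk₂ k
    (fun a x => LinearMap.mulRight k a ∘ₗ φ ∘ₗ LinearMap.mulRight k (S' x))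
    (by intros; ext; simp [mul_add]) (by intros; ext; simp)
    (by intros; ext; simp [mul_add, add_mul]) (by intros; ext; simp))

@[simp] theorem kMap_tmul (φ : H →ₗ[k] A) (S' : H →ₗ[k] H) (a : A) (x h : H) :
    kMap φ S' (a ⊗ₜ x) h = φ (h * S' x) * a := rfl

theorem kMap_colin {ρA : A →ₐ[k] A ⊗[k] H} (hA : OrdComod ρA.toLinearMap)
    (φ : H →ₗ[k] A) (hφ : ∀ x, ρA (φ x) = LinearMap.rTensor H φ (comul x))
    (S' : H →ₗ[k] H) (h1 : ∀ x, S' (antipode k x) = x) (h2 : ∀ x, antipode k (S' x) = x)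
    (c : A) (h : H) :
    ρA (kMap φ S' (ρA c) h) = LinearMap.rTensor H (kMap φ S' (ρA c)) (comul h) := by
  let L : (A ⊗[k] H) ⊗[k] (H ⊗[k] H) →ₗ[k] A ⊗[k] H :=
    LinearMap.mul' k (A ⊗[k] H) ∘ₗ (TensorProduct.comm k _ _).toLinearMap ∘ₗ
      LinearMap.lTensor (A ⊗[k] H) (LinearMap.rTensor H φ ∘ₗ LinearMap.mulLeft k (comul h) ∘ₗ
        (TensorProduct.comm k H H).toLinearMap ∘ₗ TensorProduct.map S' S')
  let L' : A ⊗[k] H →ₗ[k] A ⊗[k] H :=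
    LinearMap.applyₗ (comul h) ∘ₗ LinearMap.rTensorHom H ∘ₗ kMap φ S'
  have e : ρA.toLinearMap ∘ₗ LinearMap.applyₗ h ∘ₗ kMap φ S' =
      L ∘ₗ TensorProduct.map ρA.toLinearMap comul := by
    ext a x
    simp [L, hφ, antipode_surj_inv S' h1 h2]
  have key := fourfold hA L L' (by
      intro a x z
      have : ∀ v w : H ⊗[k] H, LinearMap.mul' k (A ⊗[k] H) (TensorProduct.comm k _ _
          (LinearMap.lTensor (A ⊗[k] H) (LinearMap.rTensor H φ ∘ₗ LinearMap.mulLeft k v ∘ₗ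
        (TensorProduct.comm k H H).toLinearMap ∘ₗ TensorProduct.map S' S')
          ((TensorProduct.assoc k A H (H ⊗[k] H)).symm
          (a ⊗ₜ TensorProduct.assoc k H H H (w ⊗ₜ z))))) =
          LinearMap.rTensor H (kMap φ S' (a ⊗ₜ z)) v * (1 ⊗ₜ
            LinearMap.mul' k H (TensorProduct.map S' LinearMap.id (TensorProduct.comm k H H w))) := by
        intro v w
        induction w with
        | zero => simp
        | tmul y1 y2 =>
          induction v with
          | zero => simp
          | tmul p q => simp [mul_assoc]
          | add a b ha hb =>
            simp only [TensorProduct.assoc_tmul, TensorProduct.assoc_symm_tmul,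
              LinearMap.lTensor_tmul, LinearMap.comp_apply, TensorProduct.comm_tmul,
              LinearMap.mul'_apply, LinearMap.mulLeft_apply, add_mul, map_add] at ha hb ⊢
            rw [ha, hb]
        | add a b ha hb => simp only [map_add, ha, hb, add_tmul, tmul_add, mul_add]
      have t := this (comul h) (comul x)
      rw [skew_antipode S' h1 h2] at t
      refine t.trans ?_
      rw [tmul_smul, mul_smul_comm]
      congr 1
      exact mul_one _) c
  have e' := LinearMap.congr_fun e (ρA c)
  simp only [LinearMap.comp_apply] at e'
  refine e'.trans ?_
  exact key


/-- Auxiliary averaging map. -/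
def wMap (ρA : A →ₐ[k] A ⊗[k] H) (ρ : N →ₗ[k] N ⊗[k] H) (act : N →ₗ[k] A →ₗ[k] N)
    (φ : H →ₗ[k] A) (S' : H →ₗ[k] H) : N ⊗[k] A →ₗ[k] N :=
  TensorProduct.lift (LinearMap.mk₂ k (fun n c => trMap ρ act (kMap φ S' (ρA c)) n)
    (by intros; simp) (by intros; simp)
    (by intros; simp [trMap, LinearMap.add_comp]) (by intros; simp [trMap, LinearMap.smul_comp]))

@[simp] theorem wMap_tmul (ρA : A →ₐ[k] A ⊗[k] H) (ρ : N →ₗ[k] N ⊗[k] H)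
    (act : N →ₗ[k] A →ₗ[k] N) (φ : H →ₗ[k] A) (S' : H →ₗ[k] H) (n : N) (c : A) :
    wMap ρA ρ act φ S' (n ⊗ₜ c) = trMap ρ act (kMap φ S' (ρA c)) n := rfl

/-- `c ⊗ d ↦ c d₀ ⊗ d₁` -/
def ordCan (ρA : A →ₐ[k] A ⊗[k] H) : A ⊗[k] A →ₗ[k] A ⊗[k] H :=
  LinearMap.rTensor H (LinearMap.mul' k A) ∘ₗ (TensorProduct.assoc k A A H).symm.toLinearMap ∘ₗ
    LinearMap.lTensor A ρA.toLinearMap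

/-- `c ⊗ d ↦ c₀ d ⊗ c₁` -/
def ordCan' (ρA : A →ₐ[k] A ⊗[k] H) : A ⊗[k] A →ₗ[k] A ⊗[k] H :=
  LinearMap.mul' k (A ⊗[k] H) ∘ₗ
    TensorProduct.map ρA.toLinearMap ((TensorProduct.mk k A H).flip 1)

/-- `a ⊗ h ↦ a₀ ⊗ a₁ S h` -/
def ordPhi (ρA : A →ₐ[k] A ⊗[k] H) : A ⊗[k] H →ₗ[k] A ⊗[k] H :=
  LinearMap.mul' k (A ⊗[k] H) ∘ₗ
    TensorProduct.map ρA.toLinearMap (TensorProduct.mk k A H 1 ∘ₗ antipode k)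

theorem ordPhi_can {ρA : A →ₐ[k] A ⊗[k] H} (hA : OrdComod ρA.toLinearMap) (x : A ⊗[k] A) :
    ordPhi ρA (ordCan ρA x) = ordCan' ρA x := by
  have key : ∀ d, LinearMap.mul' k (A ⊗[k] H) (LinearMap.lTensor (A ⊗[k] H)
      (TensorProduct.mk k A H 1 ∘ₗ antipode k)
      (LinearMap.rTensor H ρA.toLinearMap (ρA.toLinearMap d))) = d ⊗ₜ 1 := by
    intro d
    refine threefold hA (LinearMap.mul' k (A ⊗[k] H) ∘ₗ (LinearMap.lTensor (A ⊗[k] H)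
      (TensorProduct.mk k A H 1 ∘ₗ antipode k))) ((TensorProduct.mk k A H).flip 1) ?_ d
    intro n x
    have : ∀ w : H ⊗[k] H, (LinearMap.mul' k (A ⊗[k] H) ∘ₗ (LinearMap.lTensor (A ⊗[k] H)
      (TensorProduct.mk k A H 1 ∘ₗ antipode k))) ((TensorProduct.assoc k A H H).symm
          (n ⊗ₜ w)) = n ⊗ₜ LinearMap.mul' k H (LinearMap.lTensor H (antipode k) w) := by
      intro w
      induction w with
      | zero => simp
      | tmul a b => simp
      | add a b ha hb => simp only [map_add, ha, hb, tmul_add]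
    rw [this]
    simp [Algebra.algebraMap_eq_smul_one]
  induction x with
  | zero => simp
  | add a b ha hb => simp only [map_add, ha, hb]
  | tmul c d =>
    have e : ∀ w : A ⊗[k] H, ordPhi ρA (LinearMap.rTensor H (LinearMap.mul' k A)
        ((TensorProduct.assoc k A A H).symm (c ⊗ₜ w))) =
        ρA c * LinearMap.mul' k (A ⊗[k] H) (LinearMap.lTensor (A ⊗[k] H)
      (TensorProduct.mk k A H 1 ∘ₗ antipode k) (LinearMap.rTensor H ρA.toLinearMap w)) := by
      intro w
      induction w with
      | zero => simp
      | tmul a b => simp [ordPhi, mul_assoc]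
      | add a b ha hb => simp only [map_add, ha, hb, tmul_add, mul_add]
    refine (e (ρA d)).trans ?_
    have := key d
    simp only [AlgHom.toLinearMap_apply] at this
    rw [this]
    simp [ordCan']

theorem reconstruct {ρA : A →ₐ[k] A ⊗[k] H} (hA : OrdComod ρA.toLinearMap)
    {ρ : N →ₗ[k] N ⊗[k] H} {act : N →ₗ[k] A →ₗ[k] N}
    (hN : OrdHopf ρA ρ act) (φ : H →ₗ[k] A) (hφ1 : φ 1 = 1)
    (S' : H →ₗ[k] H) (h1 : ∀ x, S' (antipode k x) = x)
    (σ : H →ₗ[k] A ⊗[k] A) (hσ : ∀ h, ordCan ρA (σ h) = 1 ⊗ₜ h) (n : N) :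
    TensorProduct.lift act (LinearMap.rTensor A (wMap ρA ρ act φ S')
      ((TensorProduct.assoc k N A A).symm (LinearMap.lTensor N σ (ρ n)))) = n := by
  have hσ' : ∀ h, ordCan' ρA (σ h) = 1 ⊗ₜ antipode k h := by
    intro h
    rw [← ordPhi_can hA, hσ]
    simp [ordPhi]
  -- the inner evaluation
  have e1 : ∀ (h' : H) (x : A ⊗[k] A), LinearMap.mul' k A (LinearMap.rTensor A
      (LinearMap.applyₗ h' ∘ₗ kMap φ S' ∘ₗ ρA.toLinearMap) x) = kMap φ S' (ordCan' ρA x) h' := by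
    intro h' x
    induction x with
    | zero => simp
    | add a b ha hb => simp only [map_add, ha, hb, LinearMap.add_apply]
    | tmul c d =>
      have : ∀ w : A ⊗[k] H, kMap φ S' w h' * d = kMap φ S' (w * (d ⊗ₜ 1)) h' := by
        intro w
        induction w with
        | zero => simp
        | tmul a b => simp [mul_assoc]
        | add a b ha hb => simp only [map_add, ha, hb, add_mul, LinearMap.add_apply]
      simpa [ordCan'] using this (ρA c)
  have e2 : ∀ (m : N) (x : A ⊗[k] A),
      TensorProduct.lift act (LinearMap.rTensor A (wMap ρA ρ act φ S')
      ((TensorProduct.assoc k N A A).symm (m ⊗ₜ x))) =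
      TensorProduct.lift act (LinearMap.lTensor N (kMap φ S' (ordCan' ρA x) ∘ₗ antipode k)
        (ρ m)) := by
    intro m x
    induction x with
    | zero => simp
    | add a b ha hb => simp only [map_add, ha, hb, tmul_add, LinearMap.add_comp,
        LinearMap.lTensor_add, LinearMap.add_apply]
    | tmul c d =>
      have : ∀ w : N ⊗[k] H, act (TensorProduct.lift act (LinearMap.lTensor N
          (kMap φ S' (ρA c) ∘ₗ antipode k) w)) d =
          TensorProduct.lift act (LinearMap.lTensor N
            (kMap φ S' (ordCan' ρA (c ⊗ₜ d)) ∘ₗ antipode k) w) := by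
        intro w
        induction w with
        | zero => simp
        | tmul a b =>
          have := e1 (antipode k b) (c ⊗ₜ d)
          simp at this
          simp [hN.act_act, ← this]
        | add a b ha hb => simp only [map_add, ha, hb, LinearMap.add_apply]
      simpa [trMap] using this (ρ m)
  let L : (N ⊗[k] H) ⊗[k] H →ₗ[k] N := TensorProduct.lift act ∘ₗ
    LinearMap.lTensor N (φ ∘ₗ LinearMap.mul' k H ∘ₗ LinearMap.rTensor H (antipode k)) ∘ₗ
     (TensorProduct.assoc k N H H).toLinearMap
  have e3 : ∀ w : N ⊗[k] H, TensorProduct.lift act (LinearMap.rTensor A (wMap ρA ρ act φ S')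
      ((TensorProduct.assoc k N A A).symm (LinearMap.lTensor N σ w))) =
      L (LinearMap.rTensor H ρ w) := by
    intro w
    induction w with
    | zero => simp
    | add a b ha hb => simp only [map_add, ha, hb]
    | tmul m h =>
      rw [LinearMap.lTensor_tmul, e2, hσ', LinearMap.rTensor_tmul]
      generalize ρ m = v
      induction v with
      | zero => simp
      | add a b ha hb => simp only [map_add, ha, hb, add_tmul]
      | tmul m x => simp [L, h1]
  rw [e3]
  refine threefold hN.com L LinearMap.id ?_ n
  intro m x
  simp [L, Algebra.algebraMap_eq_smul_one, hφ1, hN.act_one]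

/-- The counit of the adjunction, ordinary version. -/
theorem ord_counit {ρA : A →ₐ[k] A ⊗[k] H} (hA : OrdComod ρA.toLinearMap)
    {ρ : N →ₗ[k] N ⊗[k] H} {act : N →ₗ[k] A →ₗ[k] N}
    (hN : OrdHopf ρA ρ act) (φ : H →ₗ[k] A) (hφ1 : φ 1 = 1)
    (hφ : ∀ x, ρA (φ x) = LinearMap.rTensor H φ (comul x))
    (S' : H →ₗ[k] H) (h1 : ∀ x, S' (antipode k x) = x) (h2 : ∀ x, antipode k (S' x) = x)
    (hcan : Function.Surjective (ordCan ρA))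
    (Nco : Submodule k N) (hNco : ∀ n, n ∈ Nco ↔ ρ n = n ⊗ₜ 1)
    (Rel : Submodule k (Nco ⊗[k] A))
    (hRel : ∀ (m n' : Nco) (b d : A), ρA b = b ⊗ₜ 1 → (n' : N) = act m b →
      n' ⊗ₜ[k] d - m ⊗ₜ[k] (b * d) ∈ Rel) :
    Function.Surjective (TensorProduct.lift (act ∘ₗ Nco.subtype)) ∧
    ∀ y, TensorProduct.lift (act ∘ₗ Nco.subtype) y = 0 → y ∈ Rel := by
  obtain ⟨σ0, hσ0⟩ := (ordCan ρA).exists_rightInverse_of_surjective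
    (LinearMap.range_eq_top.2 hcan)
  let σ : H →ₗ[k] A ⊗[k] A := σ0 ∘ₗ TensorProduct.mk k A H 1
  have hσ : ∀ h, ordCan ρA (σ h) = 1 ⊗ₜ h := fun h => LinearMap.congr_fun hσ0 (1 ⊗ₜ h)
  have hw : ∀ t, wMap ρA ρ act φ S' t ∈ Nco := by
    intro t
    induction t with
    | zero => simp
    | add a b ha hb => rw [map_add]; exact Nco.add_mem ha hb
    | tmul n c =>
      rw [hNco, wMap_tmul]
      exact trMap_coinv hN _ (kMap_colin hA φ hφ S' h1 h2 c) n
  let W : N ⊗[k] A →ₗ[k] Nco := (wMap ρA ρ act φ S').codRestrict Nco hw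
  let Ω : N ⊗[k] (A ⊗[k] A) →ₗ[k] Nco ⊗[k] A :=
    LinearMap.rTensor A W ∘ₗ (TensorProduct.assoc k N A A).symm.toLinearMap
  have hΩ : ∀ u, TensorProduct.lift (act ∘ₗ Nco.subtype) (Ω u) =
      TensorProduct.lift act (LinearMap.rTensor A (wMap ρA ρ act φ S')
        ((TensorProduct.assoc k N A A).symm u)) := by
    intro u
    have : TensorProduct.lift (act ∘ₗ Nco.subtype) ∘ₗ Ω =
      TensorProduct.lift act ∘ₗ LinearMap.rTensor A (wMap ρA ρ act φ S') ∘ₗ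
        (TensorProduct.assoc k N A A).symm.toLinearMap := by
      ext; simp [Ω, W]
    exact LinearMap.congr_fun this u
  refine ⟨fun n => ⟨Ω (LinearMap.lTensor N σ (ρ n)), ?_⟩, ?_⟩
  · rw [hΩ]
    exact reconstruct hA hN φ hφ1 S' h1 σ hσ n
  · have step : ∀ (m : Nco) (u : A ⊗[k] (A ⊗[k] A)),
        Rel.mkQ (Ω (LinearMap.rTensor (A ⊗[k] A) (act m) u)) = Rel.mkQ (m ⊗ₜ
          TensorProduct.lift (LinearMap.mul k A) (LinearMap.rTensor A
            (wMap ρA ρA.toLinearMap (LinearMap.mul k A) φ S')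
            ((TensorProduct.assoc k A A A).symm u))) := by
      intro m u
      have : Rel.mkQ ∘ₗ Ω ∘ₗ LinearMap.rTensor (A ⊗[k] A) (act m) =
        Rel.mkQ ∘ₗ TensorProduct.mk k Nco A m ∘ₗ TensorProduct.lift (LinearMap.mul k A) ∘ₗ
          LinearMap.rTensor A (wMap ρA ρA.toLinearMap (LinearMap.mul k A) φ S') ∘ₗ
            (TensorProduct.assoc k A A A).symm.toLinearMap := by
        ext a c d
        simp only [LinearMap.comp_apply, Ω, TensorProduct.AlgebraTensorModule.curry_apply,
          TensorProduct.curry_apply, LinearMap.rTensor_tmul, LinearEquiv.coe_coe,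
          TensorProduct.assoc_symm_tmul, LinearMap.restrictScalars_self,
          TensorProduct.lift.tmul,
          TensorProduct.mk_apply, Submodule.mkQ_apply, LinearMap.mul_apply']
        rw [Submodule.Quotient.eq]
        refine hRel _ _ _ _ ?_ ?_
        · exact trMap_coinv (ordHopf_self hA) _ (kMap_colin hA φ hφ S' h1 h2 c) a
        · exact trMap_act hN _ (m : N) ((hNco _).1 m.2) a
      exact LinearMap.congr_fun this u
    have inv : ∀ y, Rel.mkQ (Ω (LinearMap.lTensor N σ
        (ρ (TensorProduct.lift (act ∘ₗ Nco.subtype) y)))) = Rel.mkQ y := by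
      intro y
      induction y with
      | zero => simp
      | add a b ha hb => simp only [map_add] at ha hb ⊢; rw [ha, hb]
      | tmul m a =>
        have e : ρ (act m a) = LinearMap.rTensor H (act m) (ρA a) := by
          rw [hN.compat, (hNco _).1 m.2]
          generalize ρA a = w
          induction w with
          | zero => simp
          | add a b ha hb => simp only [map_add, ha, hb]
          | tmul a b => simp
        have e' : LinearMap.lTensor N σ (LinearMap.rTensor H (act m) (ρA a)) =
          LinearMap.rTensor (A ⊗[k] A) (act m) (LinearMap.lTensor A σ (ρA a)) := by
          rw [← LinearMap.comp_apply, LinearMap.lTensor_comp_rTensor,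
            ← LinearMap.rTensor_comp_lTensor]; rfl
        have e0 : TensorProduct.lift (act ∘ₗ Nco.subtype) (m ⊗ₜ[k] a) = act m a := by simp
        rw [e0, e, e', step]
        have := reconstruct hA (ordHopf_self hA) φ hφ1 S' h1 σ hσ a
        simp only [AlgHom.toLinearMap_apply] at this
        rw [this]
    intro y hy
    have := inv y
    rw [hy] at this
    simp only [map_zero] at this
    rw [← Submodule.Quotient.mk_eq_zero]
    exact this.symm

/-- The trace on `A`. -/
theorem ord_trace {ρA : A →ₐ[k] A ⊗[k] H} (hA : OrdComod ρA.toLinearMap)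
    (φ : H →ₗ[k] A) (hφ1 : φ 1 = 1)
    (hφ : ∀ x, ρA (φ x) = LinearMap.rTensor H φ (comul x)) :
    (∀ a, ρA (trMap ρA.toLinearMap (LinearMap.mul k A) φ a) =
      trMap ρA.toLinearMap (LinearMap.mul k A) φ a ⊗ₜ 1) ∧
    (∀ b a, ρA b = b ⊗ₜ 1 → trMap ρA.toLinearMap (LinearMap.mul k A) φ (b * a) =
      b * trMap ρA.toLinearMap (LinearMap.mul k A) φ a) ∧
    trMap ρA.toLinearMap (LinearMap.mul k A) φ 1 = 1 := by
  refine ⟨fun a => trMap_coinv (ordHopf_self hA) φ hφ a,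
    fun b a hb => trMap_act (ordHopf_self hA) φ b hb a, ?_⟩
  simp [trMap, hφ1, Algebra.TensorProduct.one_def]
end HopfCore


section Untwist

/-- The untwisted ring. -/
abbrev utRing {k A : Type} [Field k] [AddCommGroup A] [Module k A] (mul : A →ₗ[k] A →ₗ[k] A)
    (one : A) (aut : A ≃ₗ[k] A)
    (hom_assoc : ∀ a b c, mul (aut a) (mul b c) = mul (mul a b) (aut c))
    (mulOne : ∀ a, mul a one = aut a) (oneMul : ∀ a, mul one a = aut a)
    (aut_mul : ∀ a b, aut (mul a b) = mul (aut a) (aut b)) : Ring A :=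
  { (inferInstance : AddCommGroup A) with
    mul := fun a b => aut.symm (mul a b)
    one := one
    mul_assoc := fun a b c => by
      change aut.symm (mul (aut.symm (mul a b)) c) = aut.symm (mul a (aut.symm (mul b c)))
      have h : ∀ a b, aut.symm (mul a b) = mul (aut.symm a) (aut.symm b) := fun a b => by
        apply aut.injective; simp [aut_mul]
      rw [h a b, h b c]
      have := hom_assoc (aut.symm a) (aut.symm b) (aut.symm c)
      simp only [LinearEquiv.apply_symm_apply] at this
      rw [this]
    mul_one := fun a => by
      change aut.symm (mul a one) = a
      simp [mulOne]
    one_mul := fun a => by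
      change aut.symm (mul one a) = a
      simp [oneMul]
    left_distrib := fun a b c => by
      change aut.symm (mul a (b + c)) = aut.symm (mul a b) + aut.symm (mul a c)
      simp
    right_distrib := fun a b c => by
      change aut.symm (mul (a + b) c) = aut.symm (mul a c) + aut.symm (mul b c)
      simp
    zero_mul := fun a => by
      change aut.symm (mul 0 a) = 0
      simp
    mul_zero := fun a => by
      change aut.symm (mul a 0) = 0
      simp }

abbrev utRingH {k H : Type} [Field k] [AddCommGroup H] [Module k H]
    (Hb : MonoidalHomBialgebra k H) : Ring H :=
  utRing Hb.mul Hb.one Hb.aut Hb.hom_assoc Hb.mulOne Hb.oneMul Hb.aut_mul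

abbrev utRingA {k H A : Type} [Field k] [AddCommGroup H] [Module k H]
    [AddCommGroup A] [Module k A]
    {Hb : MonoidalHomBialgebra k H} (Ac : HomComoduleAlgebra Hb A) : Ring A :=
  utRing Ac.mul Ac.one Ac.aut Ac.hom_assoc Ac.mulOne Ac.oneMul Ac.aut_mul

abbrev utAlgH {k H : Type} [Field k] [AddCommGroup H] [Module k H]
    (Hb : MonoidalHomBialgebra k H) :
    letI := utRingH Hb; Algebra k H :=
  letI := utRingH Hb
  Algebra.ofModule (fun r x y => by
      change Hb.aut.symm (Hb.mul (r • x) y) = r • Hb.aut.symm (Hb.mul x y); simp)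
    (fun r x y => by
      change Hb.aut.symm (Hb.mul x (r • y)) = r • Hb.aut.symm (Hb.mul x y); simp)

abbrev utAlgA {k H A : Type} [Field k] [AddCommGroup H] [Module k H]
    [AddCommGroup A] [Module k A]
    {Hb : MonoidalHomBialgebra k H} (Ac : HomComoduleAlgebra Hb A) :
    letI := utRingA Ac; Algebra k A :=
  letI := utRingA Ac
  Algebra.ofModule (fun r x y => by
      change Ac.aut.symm (Ac.mul (r • x) y) = r • Ac.aut.symm (Ac.mul x y); simp)
    (fun r x y => by
      change Ac.aut.symm (Ac.mul x (r • y)) = r • Ac.aut.symm (Ac.mul x y); simp)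

theorem ut_coassoc {k H : Type} [Field k] [AddCommGroup H] [Module k H]
    (Hb : MonoidalHomBialgebra k H) {N : Type} [AddCommGroup N] [Module k N]
    (ρ : N →ₗ[k] N ⊗[k] H) (aut : N ≃ₗ[k] N)
    (coassoc : (TensorProduct.map aut.symm.toLinearMap Hb.comul) ∘ₗ ρ =
      (TensorProduct.assoc k N H H).toLinearMap ∘ₗ
        (TensorProduct.map ρ Hb.aut.symm.toLinearMap) ∘ₗ ρ)
    (coact_aut : ρ ∘ₗ aut.toLinearMap =
      (TensorProduct.map aut.toLinearMap Hb.aut.toLinearMap) ∘ₗ ρ) :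
    (TensorProduct.assoc k N H H).toLinearMap ∘ₗ
      LinearMap.rTensor H (ρ ∘ₗ aut.toLinearMap) ∘ₗ (ρ ∘ₗ aut.toLinearMap) =
    LinearMap.lTensor N (Hb.comul ∘ₗ Hb.aut.toLinearMap) ∘ₗ (ρ ∘ₗ aut.toLinearMap) := by
  ext n
  have h1 := LinearMap.congr_fun coassoc n
  have h2 : ∀ x, ρ (aut x) = _ := fun x => LinearMap.congr_fun coact_aut x
  have h3 : ∀ x, Hb.comul (Hb.aut x) = _ := fun x => LinearMap.congr_fun Hb.comul_aut x
  simp only [LinearMap.comp_apply, LinearEquiv.coe_coe] at h1 h2 h3 ⊢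
  have hL : ∀ w : N ⊗[k] H, TensorProduct.assoc k N H H (LinearMap.rTensor H
      (ρ ∘ₗ aut.toLinearMap) (TensorProduct.map aut.toLinearMap Hb.aut.toLinearMap w)) =
      TensorProduct.map (aut.toLinearMap ∘ₗ aut.toLinearMap)
        (TensorProduct.map (Hb.aut.toLinearMap ∘ₗ Hb.aut.toLinearMap)
          (Hb.aut.toLinearMap ∘ₗ Hb.aut.toLinearMap))
        (TensorProduct.assoc k N H H (TensorProduct.map ρ Hb.aut.symm.toLinearMap w)) := by
    intro w
    induction w with
    | zero => simp
    | add a b ha hb => simp only [map_add, ha, hb]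
    | tmul a b =>
      simp only [TensorProduct.map_tmul, LinearMap.rTensor_tmul, LinearMap.comp_apply,
        LinearEquiv.coe_coe, h2]
      generalize ρ a = v
      induction v with
      | zero => simp
      | add a b ha hb => simp only [map_add, ha, hb, add_tmul]
      | tmul a b => simp
  have hR : ∀ w : N ⊗[k] H, LinearMap.lTensor N (Hb.comul ∘ₗ Hb.aut.toLinearMap)
      (TensorProduct.map aut.toLinearMap Hb.aut.toLinearMap w) =
      TensorProduct.map (aut.toLinearMap ∘ₗ aut.toLinearMap)
        (TensorProduct.map (Hb.aut.toLinearMap ∘ₗ Hb.aut.toLinearMap)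
          (Hb.aut.toLinearMap ∘ₗ Hb.aut.toLinearMap))
        (TensorProduct.map aut.symm.toLinearMap Hb.comul w) := by
    intro w
    induction w with
    | zero => simp
    | add a b ha hb => simp only [map_add, ha, hb]
    | tmul a b =>
      simp only [TensorProduct.map_tmul, LinearMap.lTensor_tmul, LinearMap.comp_apply,
        LinearEquiv.coe_coe, h3, LinearEquiv.apply_symm_apply]
      generalize Hb.comul b = v
      induction v with
      | zero => simp
      | add a b ha hb => simp only [map_add, ha, hb, tmul_add]
      | tmul a b => simp
  rw [h2, hL, hR, h1]

theorem ut_counit {k H : Type} [Field k] [AddCommGroup H] [Module k H]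
    (Hb : MonoidalHomBialgebra k H) {N : Type} [AddCommGroup N] [Module k N]
    (ρ : N →ₗ[k] N ⊗[k] H) (aut : N ≃ₗ[k] N)
    (counit : (TensorProduct.rid k N).toLinearMap ∘ₗ
      (TensorProduct.map LinearMap.id Hb.counit) ∘ₗ ρ = aut.symm.toLinearMap) (n : N) :
    TensorProduct.rid k N (LinearMap.lTensor N Hb.counit (ρ (aut n))) = n := by
  have := LinearMap.congr_fun counit (aut n)
  simpa [LinearMap.lTensor] using this

theorem ut_mul_tensor {k H N A P : Type} [Field k] [AddCommGroup H] [Module k H]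
    [AddCommGroup N] [Module k N] [AddCommGroup A] [Module k A] [AddCommGroup P] [Module k P]
    (m₁ : N →ₗ[k] A →ₗ[k] P) (m₂ : H →ₗ[k] H →ₗ[k] H) (u : N ⊗[k] H) (v : A ⊗[k] H) :
    TensorProduct.map (TensorProduct.lift m₁) (TensorProduct.lift m₂)
      (TensorProduct.tensorTensorTensorComm k N H A H (u ⊗ₜ v)) =
    TensorProduct.map₂ m₁ m₂ u v := by
  induction u with
  | zero => simp
  | add a b ha hb => simp only [map_add, ha, hb, add_tmul, LinearMap.add_apply]
  | tmul a b =>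
    induction v with
    | zero => simp
    | add a b ha hb => simp only [map_add, ha, hb, tmul_add]
    | tmul c d => simp

theorem ut_mul_eq {k A B : Type} [Field k] [Ring A] [Algebra k A] [Ring B] [Algebra k B]
    (x y : A ⊗[k] B) :
    x * y = TensorProduct.map₂ (LinearMap.mul k A) (LinearMap.mul k B) x y := by
  have : TensorProduct.map₂ (LinearMap.mul k A) (LinearMap.mul k B) =
    LinearMap.mul k (A ⊗[k] B) := by
    ext; simp
  rw [this]; rfl

theorem ut_map₂ {k H N A P : Type} [Field k] [AddCommGroup H] [Module k H]
    [AddCommGroup N] [Module k N] [AddCommGroup A] [Module k A] [AddCommGroup P] [Module k P]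
    (m₁ m₁' : N →ₗ[k] A →ₗ[k] P) (m₂ m₂' : H →ₗ[k] H →ₗ[k] H)
    (f : N →ₗ[k] N) (g : A →ₗ[k] A) (h : H →ₗ[k] H)
    (h₁ : ∀ a b, m₁' (f a) (g b) = m₁ a b) (h₂ : ∀ a b, m₂' (h a) (h b) = m₂ a b)
    (u : N ⊗[k] H) (v : A ⊗[k] H) :
    TensorProduct.map₂ m₁' m₂' (TensorProduct.map f h u) (TensorProduct.map g h v) =
    TensorProduct.map₂ m₁ m₂ u v := by
  induction u with
  | zero => simp
  | add a b ha hb => simp only [map_add, ha, hb, LinearMap.add_apply]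
  | tmul a b =>
    induction v with
    | zero => simp
    | add a b ha hb => simp only [map_add, ha, hb]
    | tmul c d => simp [h₁, h₂]

abbrev utHopf {k H : Type} [Field k] [AddCommGroup H] [Module k H]
    (Hh : MonoidalHomHopf k H) :
    letI := utRingH Hh.toMonoidalHomBialgebra; HopfAlgebra k H :=
  letI := utRingH Hh.toMonoidalHomBialgebra
  { utAlgH Hh.toMonoidalHomBialgebra with
    comul := Hh.comul ∘ₗ Hh.aut.toLinearMap
    counit := Hh.counit
    coassoc := ut_coassoc Hh.toMonoidalHomBialgebra Hh.comul Hh.aut Hh.coassoc.symm Hh.comul_aut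
    rTensor_counit_comp_comul := by
      ext x
      apply (TensorProduct.lid k H).injective
      have := LinearMap.congr_fun Hh.counit_left (Hh.aut x)
      simpa [LinearMap.rTensor] using this
    lTensor_counit_comp_comul := by
      ext x
      apply (TensorProduct.rid k H).injective
      have := LinearMap.congr_fun Hh.counit_right (Hh.aut x)
      simpa [LinearMap.lTensor] using this
    counit_one := Hh.counit_one
    mul_compr₂_counit := by
      ext x y
      change Hh.counit (Hh.aut.symm (Hh.mul x y)) = Hh.counit x * Hh.counit y
      rw [← Hh.counit_mul]
      have := LinearMap.congr_fun Hh.counit_aut (Hh.aut.symm (Hh.mul x y))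
      simpa using this.symm
    comul_one := by
      change Hh.comul (Hh.aut Hh.one) = Hh.one ⊗ₜ Hh.one
      rw [Hh.aut_one, Hh.comul_one]
    mul_compr₂_comul := by
      apply LinearMap.ext₂
      intro x y
      let _ : Algebra k H := utAlgH Hh.toMonoidalHomBialgebra
      refine Eq.trans ?_ (ut_mul_eq _ _).symm
      change Hh.comul (Hh.aut (Hh.aut.symm (Hh.mul x y))) =
        TensorProduct.map₂ (Hh.mul.compr₂ Hh.aut.symm.toLinearMap)
          (Hh.mul.compr₂ Hh.aut.symm.toLinearMap) (Hh.comul (Hh.aut x)) (Hh.comul (Hh.aut y))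
      have h3 : ∀ x, Hh.comul (Hh.aut x) = _ := fun x => LinearMap.congr_fun Hh.comul_aut x
      have h4 := LinearMap.congr_fun Hh.comul_mul (x ⊗ₜ y)
      simp only [LinearMap.comp_apply, LinearEquiv.coe_coe, TensorProduct.lift.tmul,
        TensorProduct.map_tmul, ut_mul_tensor] at h3 h4
      have h5 : ∀ a b, (Hh.mul.compr₂ Hh.aut.symm.toLinearMap) (Hh.aut.toLinearMap a)
          (Hh.aut.toLinearMap b) = Hh.mul a b := fun a b => by simp [← Hh.aut_mul]
      rw [LinearEquiv.apply_symm_apply, h4, h3, h3, ut_map₂ _ _ _ _ _ _ _ h5 h5]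
    antipode := Hh.antipode
    mul_antipode_rTensor_comul := by
      apply LinearMap.ext
      intro x
      have h4 := LinearMap.congr_fun Hh.antipode_mul_left (Hh.aut x)
      have h6 := LinearMap.congr_fun Hh.counit_aut x
      simp only [LinearMap.comp_apply, LinearEquiv.coe_coe,
        LinearMap.toSpanSingleton_apply] at h4 h6
      rw [h6] at h4
      have h7 : Hh.aut.symm Hh.one = Hh.one := by
        rw [LinearEquiv.symm_apply_eq, Hh.aut_one]
      change TensorProduct.lift (Hh.mul.compr₂ Hh.aut.symm.toLinearMap)
        (TensorProduct.map Hh.antipode LinearMap.id (Hh.comul (Hh.aut x))) =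
          Hh.counit x • Hh.one
      have h8 : ∀ w, TensorProduct.lift (Hh.mul.compr₂ Hh.aut.symm.toLinearMap) w =
          Hh.aut.symm (TensorProduct.lift Hh.mul w) := by
        intro w
        induction w with
        | zero => simp
        | add a b ha hb => simp only [map_add, ha, hb]
        | tmul c d => simp
      rw [h8, h4, map_smul, h7]
    mul_antipode_lTensor_comul := by
      apply LinearMap.ext
      intro x
      have h4 := LinearMap.congr_fun Hh.antipode_mul_right (Hh.aut x)
      have h6 := LinearMap.congr_fun Hh.counit_aut x
      simp only [LinearMap.comp_apply, LinearEquiv.coe_coe,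
        LinearMap.toSpanSingleton_apply] at h4 h6
      rw [h6] at h4
      have h7 : Hh.aut.symm Hh.one = Hh.one := by
        rw [LinearEquiv.symm_apply_eq, Hh.aut_one]
      change TensorProduct.lift (Hh.mul.compr₂ Hh.aut.symm.toLinearMap)
        (TensorProduct.map LinearMap.id Hh.antipode (Hh.comul (Hh.aut x))) =
          Hh.counit x • Hh.one
      have h8 : ∀ w, TensorProduct.lift (Hh.mul.compr₂ Hh.aut.symm.toLinearMap) w =
          Hh.aut.symm (TensorProduct.lift Hh.mul w) := by
        intro w
        induction w with
        | zero => simp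
        | add a b ha hb => simp only [map_add, ha, hb]
        | tmul c d => simp
      rw [h8, h4, map_smul, h7] }

end Untwist


section Untwist2

variable {k H A : Type} [Field k] [AddCommGroup H] [Module k H] [AddCommGroup A] [Module k A]

abbrev utRho (Hh : MonoidalHomHopf k H) (Ac : HomComoduleAlgebra Hh.toMonoidalHomBialgebra A) :
    letI := utRingH Hh.toMonoidalHomBialgebra
    letI := utHopf Hh
    letI := utRingA Ac
    letI := utAlgA Ac
    A →ₐ[k] A ⊗[k] H :=
  letI := utRingH Hh.toMonoidalHomBialgebra
  letI := utHopf Hh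
  letI := utRingA Ac
  letI := utAlgA Ac
  AlgHom.ofLinearMap (Ac.coact ∘ₗ Ac.aut.toLinearMap)
    (by
      change Ac.coact (Ac.aut Ac.one) = Ac.one ⊗ₜ Hh.one
      rw [Ac.aut_one, Ac.coact_one])
    (by
      intro x y
      refine Eq.trans ?_ (ut_mul_eq _ _).symm
      change Ac.coact (Ac.aut (Ac.aut.symm (Ac.mul x y))) =
        TensorProduct.map₂ (Ac.mul.compr₂ Ac.aut.symm.toLinearMap)
          (Hh.mul.compr₂ Hh.aut.symm.toLinearMap) (Ac.coact (Ac.aut x)) (Ac.coact (Ac.aut y))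
      have h3 : ∀ x, Ac.coact (Ac.aut x) = _ := fun x => LinearMap.congr_fun Ac.coact_aut x
      have h4 := LinearMap.congr_fun Ac.coact_mul (x ⊗ₜ y)
      simp only [LinearMap.comp_apply, LinearEquiv.coe_coe, TensorProduct.lift.tmul,
        TensorProduct.map_tmul, ut_mul_tensor] at h3 h4
      have h5 : ∀ a b, (Hh.mul.compr₂ Hh.aut.symm.toLinearMap) (Hh.aut.toLinearMap a)
          (Hh.aut.toLinearMap b) = Hh.mul a b := fun a b => by simp [← Hh.aut_mul]
      have h6 : ∀ a b, (Ac.mul.compr₂ Ac.aut.symm.toLinearMap) (Ac.aut.toLinearMap a)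
          (Ac.aut.toLinearMap b) = Ac.mul a b := fun a b => by simp [← Ac.aut_mul]
      rw [LinearEquiv.apply_symm_apply, h4, h3, h3, ut_map₂ _ _ _ _ _ _ _ h6 h5])

theorem utRho_comod (Hh : MonoidalHomHopf k H)
    (Ac : HomComoduleAlgebra Hh.toMonoidalHomBialgebra A) :
    letI := utRingH Hh.toMonoidalHomBialgebra
    letI := utHopf Hh
    letI := utRingA Ac
    letI := utAlgA Ac
    OrdComod (utRho Hh Ac).toLinearMap :=
  letI := utRingH Hh.toMonoidalHomBialgebra
  letI := utHopf Hh
  letI := utRingA Ac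
  letI := utAlgA Ac
  ⟨fun n => LinearMap.congr_fun (ut_coassoc Hh.toMonoidalHomBialgebra Ac.coact Ac.aut
      Ac.coassoc Ac.coact_aut) n,
    fun n => ut_counit Hh.toMonoidalHomBialgebra Ac.coact Ac.aut Ac.counit n⟩

theorem utCan (Hh : MonoidalHomHopf k H)
    (Ac : HomComoduleAlgebra Hh.toMonoidalHomBialgebra A) :
    letI := utRingH Hh.toMonoidalHomBialgebra
    letI := utHopf Hh
    letI := utRingA Ac
    letI := utAlgA Ac
    ordCan (utRho Hh Ac) = canPreLin Ac := by
  apply TensorProduct.ext'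
  intro a b
  have h3 : ∀ x, Ac.coact (Ac.aut x) = _ := fun x => LinearMap.congr_fun Ac.coact_aut x
  simp only [LinearMap.comp_apply] at h3
  change TensorProduct.map (TensorProduct.lift (Ac.mul.compr₂ Ac.aut.symm.toLinearMap))
    LinearMap.id ((TensorProduct.assoc k A A H).symm (a ⊗ₜ Ac.coact (Ac.aut b))) =
    TensorProduct.map (TensorProduct.lift Ac.mul) Hh.aut.toLinearMap
      ((TensorProduct.assoc k A A H).symm (Ac.aut.symm a ⊗ₜ Ac.coact b))
  rw [h3]
  generalize Ac.coact b = v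
  have h : ∀ a b, Ac.aut.symm (Ac.mul a b) = Ac.mul (Ac.aut.symm a) (Ac.aut.symm b) :=
    fun a b => by
      apply Ac.aut.injective; simp [Ac.aut_mul]
  induction v with
  | zero => simp
  | add a b ha hb => simp only [map_add, ha, hb, tmul_add]
  | tmul c d => simp [h]

theorem mem_coinv {M : Type} [AddCommGroup M] [Module k M] (Hb : MonoidalHomBialgebra k H)
    (coact : M →ₗ[k] M ⊗[k] H) (aut : M ≃ₗ[k] M)
    (hc : coact ∘ₗ aut.toLinearMap =
      (TensorProduct.map aut.toLinearMap Hb.aut.toLinearMap) ∘ₗ coact) (n : M) :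
    coact n = aut.symm n ⊗ₜ Hb.one ↔ coact (aut n) = n ⊗ₜ Hb.one := by
  have h3 : ∀ x, coact (aut x) = _ := fun x => LinearMap.congr_fun hc x
  simp only [LinearMap.comp_apply] at h3
  have h : n ⊗ₜ[k] Hb.one = TensorProduct.congr aut Hb.aut (aut.symm n ⊗ₜ Hb.one) := by
    simp [Hb.aut_one]
  rw [h3, h]
  exact (TensorProduct.congr aut Hb.aut).injective.eq_iff.symm

theorem mem_coinv_aut {M : Type} [AddCommGroup M] [Module k M] (Hb : MonoidalHomBialgebra k H)
    (coact : M →ₗ[k] M ⊗[k] H) (aut : M ≃ₗ[k] M)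
    (hc : coact ∘ₗ aut.toLinearMap =
      (TensorProduct.map aut.toLinearMap Hb.aut.toLinearMap) ∘ₗ coact) (n : M) :
    coact n = aut.symm n ⊗ₜ Hb.one ↔ coact (aut n) = aut.symm (aut n) ⊗ₜ Hb.one := by
  rw [mem_coinv Hb coact aut hc n]; simp

theorem mem_coinvSub {M : Type} [AddCommGroup M] [Module k M] (oneH : H)
    (coact : M →ₗ[k] M ⊗[k] H) (aut : M ≃ₗ[k] M) (n : M) :
    n ∈ coinvSubmoduleOf oneH coact aut ↔ coact n = aut.symm n ⊗ₜ oneH := by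
  simp [coinvSubmoduleOf, sub_eq_zero]

theorem ut_ordHopf (Hh : MonoidalHomHopf k H)
    (Ac : HomComoduleAlgebra Hh.toMonoidalHomBialgebra A)
    {N : Type} [AddCommGroup N] [Module k N] (P : HomHopfModule Ac N) :
    letI := utRingH Hh.toMonoidalHomBialgebra
    letI := utHopf Hh
    letI := utRingA Ac
    letI := utAlgA Ac
    OrdHopf (utRho Hh Ac) (P.coact ∘ₗ P.aut.toLinearMap)
      (P.act.compr₂ P.aut.symm.toLinearMap) := by
  let i1 := utRingH Hh.toMonoidalHomBialgebra
  let i2 := utHopf Hh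
  let i3 := utRingA Ac
  let i4 := utAlgA Ac
  refine ⟨⟨fun n => LinearMap.congr_fun (ut_coassoc Hh.toMonoidalHomBialgebra P.coact P.aut
      P.coassoc P.coact_aut) n,
    fun n => ut_counit Hh.toMonoidalHomBialgebra P.coact P.aut P.counit n⟩, ?_, ?_, ?_⟩
  · intro n a b
    change P.aut.symm (P.act (P.aut.symm (P.act n a)) b) =
      P.aut.symm (P.act n (Ac.aut.symm (Ac.mul a b)))
    have h : ∀ a b, Ac.aut.symm (Ac.mul a b) = Ac.mul (Ac.aut.symm a) (Ac.aut.symm b) :=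
      fun a b => by apply Ac.aut.injective; simp [Ac.aut_mul]
    have h' : ∀ a b, P.aut.symm (P.act a b) = P.act (P.aut.symm a) (Ac.aut.symm b) :=
      fun a b => by apply P.aut.injective; simp [P.aut_act]
    have := P.act_act (P.aut.symm n) (Ac.aut.symm a) (Ac.aut.symm b)
    simp only [LinearEquiv.apply_symm_apply] at this
    rw [h, h' n a, this]
  · intro n
    change P.aut.symm (P.act n Ac.one) = n
    rw [P.act_one]; simp
  · intro x y
    change P.coact (P.aut (P.aut.symm (P.act x y))) =
      TensorProduct.map₂ (P.act.compr₂ P.aut.symm.toLinearMap)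
        (Hh.mul.compr₂ Hh.aut.symm.toLinearMap) (P.coact (P.aut x)) (Ac.coact (Ac.aut y))
    have h3 : ∀ x, Ac.coact (Ac.aut x) = _ := fun x => LinearMap.congr_fun Ac.coact_aut x
    have h3' : ∀ x, P.coact (P.aut x) = _ := fun x => LinearMap.congr_fun P.coact_aut x
    have h4 := LinearMap.congr_fun P.compat (x ⊗ₜ y)
    simp only [LinearMap.comp_apply, LinearEquiv.coe_coe, TensorProduct.lift.tmul,
      TensorProduct.map_tmul, ut_mul_tensor] at h3 h3' h4
    have h5 : ∀ a b, (Hh.mul.compr₂ Hh.aut.symm.toLinearMap) (Hh.aut.toLinearMap a)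
        (Hh.aut.toLinearMap b) = Hh.mul a b := fun a b => by simp [← Hh.aut_mul]
    have h6 : ∀ a b, (P.act.compr₂ P.aut.symm.toLinearMap) (P.aut.toLinearMap a)
        (Ac.aut.toLinearMap b) = P.act a b := fun a b => by simp [← P.aut_act]
    rw [LinearEquiv.apply_symm_apply, h4, h3, h3', ut_map₂ _ _ _ _ _ _ _ h6 h5]

theorem ut_phi (Hh : MonoidalHomHopf k H)
    (Ac : HomComoduleAlgebra Hh.toMonoidalHomBialgebra A)
    (φ : H →ₗ[k] A) (hφ : IsTotalIntegral Ac φ) (x : H) :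
    Ac.coact (Ac.aut (φ x)) = LinearMap.rTensor H φ (Hh.comul (Hh.aut x)) := by
  have h1 := LinearMap.congr_fun hφ.1 x
  have h2 := LinearMap.congr_fun hφ.2.1 (Hh.aut x)
  simp only [LinearMap.comp_apply, LinearEquiv.coe_coe] at h1 h2
  rw [← h1, h2]; rfl

theorem ut_counitBij (Hh : MonoidalHomHopf k H) (Sinv : H →ₗ[k] H)
    (hSinv₁ : Sinv ∘ₗ Hh.antipode = LinearMap.id)
    (hSinv₂ : Hh.antipode ∘ₗ Sinv = LinearMap.id)
    (Ac : HomComoduleAlgebra Hh.toMonoidalHomBialgebra A)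
    (φ : H →ₗ[k] A) (hφ : IsTotalIntegral Ac φ)
    (hcan : Function.Surjective (canPreLin Ac))
    (N : Type) [AddCommGroup N] [Module k N] (P : HomHopfModule Ac N) :
    CounitBijectiveR Ac (coinvA Ac) P := by
  let i1 := utRingH Hh.toMonoidalHomBialgebra
  let i2 := utHopf Hh
  let i3 := utRingA Ac
  let i4 := utAlgA Ac
  have hcan' : Function.Surjective (ordCan (utRho Hh Ac)) := by
    have := utCan Hh Ac
    rw [← this] at hcan
    exact hcan
  have hA' : ∀ a b, Ac.aut.symm (Ac.mul a b) = Ac.mul (Ac.aut.symm a) (Ac.aut.symm b) :=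
    fun a b => by apply Ac.aut.injective; simp [Ac.aut_mul]
  have hP' : ∀ a b, P.aut.symm (P.act a b) = P.act (P.aut.symm a) (Ac.aut.symm b) :=
    fun a b => by apply P.aut.injective; simp [P.aut_act]
  have key := ord_counit (utRho_comod Hh Ac) (ut_ordHopf Hh Ac P) φ hφ.2.2
    (fun x => ut_phi Hh Ac φ hφ x) Sinv (fun x => LinearMap.congr_fun hSinv₁ x)
    (fun x => LinearMap.congr_fun hSinv₂ x) hcan'
    (coinvSubmoduleOf Hh.one P.coact P.aut)
    (fun n => (mem_coinvSub _ _ _ n).trans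
      (mem_coinv Hh.toMonoidalHomBialgebra P.coact P.aut P.coact_aut n))
    (relCoinvR Ac (coinvA Ac) P) (by
      intro m n' b d hb hn'
      apply Submodule.subset_span
      have hm : P.aut.symm m ∈ coinvSubmoduleOf Hh.one P.coact P.aut := by
        rw [mem_coinvSub, mem_coinv_aut Hh.toMonoidalHomBialgebra P.coact P.aut P.coact_aut]
        have := m.2
        rw [mem_coinvSub] at this
        simpa using this
      refine ⟨⟨P.aut.symm m, hm⟩, n', m, Ac.aut.symm d, Ac.aut.symm b, ?_, ?_, ?_, ?_⟩
      · change Ac.coact (Ac.aut.symm b) = Ac.aut.symm (Ac.aut.symm b) ⊗ₜ Hh.one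
        rw [mem_coinv_aut Hh.toMonoidalHomBialgebra Ac.coact Ac.aut Ac.coact_aut]
        simp only [LinearEquiv.apply_symm_apply]
        rw [mem_coinv Hh.toMonoidalHomBialgebra Ac.coact Ac.aut Ac.coact_aut]
        exact hb
      · rw [hn']
        exact hP' m b
      · simp
      · rw [← hA']
        simp only [LinearEquiv.apply_symm_apply]
        rfl)
  have hc : ∀ y, counitPre Ac P y = P.aut (TensorProduct.lift
      (P.act.compr₂ P.aut.symm.toLinearMap ∘ₗ
        (coinvSubmoduleOf Hh.one P.coact P.aut).subtype) y) := by
    intro y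
    unfold counitPre
    induction y with
    | zero => simp
    | add a b ha hb => simp only [map_add, ha, hb]
    | tmul c d => simp
  constructor
  · intro n
    obtain ⟨y, hy⟩ := key.1 (P.aut.symm n)
    refine ⟨y, ?_⟩
    rw [hc, LinearEquiv.eq_symm_apply] at *
    exact hy
  · apply le_antisymm
    · intro y hy
      apply key.2
      rw [LinearMap.mem_ker, hc] at hy
      simpa using hy
    · refine Submodule.span_le.2 ?_
      rintro _ ⟨n, n', n'', a, b, hb, h1, h2, rfl⟩
      simp [counitPre, h1, h2, P.act_act]

end Untwist2


section Untwist3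

variable {k H A : Type} [Field k] [AddCommGroup H] [Module k H] [AddCommGroup A] [Module k A]

theorem mem_coinvA {Hb : MonoidalHomBialgebra k H} (Ac : HomComoduleAlgebra Hb A) (b : A) :
    b ∈ coinvA Ac ↔ Ac.coact (Ac.aut b) = b ⊗ₜ Hb.one :=
  mem_coinv Hb Ac.coact Ac.aut Ac.coact_aut b

theorem mem_coinvA_aut {Hb : MonoidalHomBialgebra k H} (Ac : HomComoduleAlgebra Hb A) (b : A) :
    b ∈ coinvA Ac ↔ Ac.aut b ∈ coinvA Ac :=
  mem_coinv_aut Hb Ac.coact Ac.aut Ac.coact_aut b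

theorem mem_coinvA_symm {Hb : MonoidalHomBialgebra k H} (Ac : HomComoduleAlgebra Hb A) {b : A}
    (hb : b ∈ coinvA Ac) : Ac.aut.symm b ∈ coinvA Ac := by
  rw [mem_coinvA_aut]; simpa using hb

theorem ut_trace (Hh : MonoidalHomHopf k H)
    (Ac : HomComoduleAlgebra Hh.toMonoidalHomBialgebra A)
    (φ : H →ₗ[k] A) (hφ : IsTotalIntegral Ac φ) :
    ∃ t : A →ₗ[k] A, (∀ a, t a ∈ coinvA Ac) ∧
      (∀ b ∈ coinvA Ac, ∀ a, t (Ac.aut.symm (Ac.mul b a)) = Ac.aut.symm (Ac.mul b (t a))) ∧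
      t Ac.one = Ac.one ∧
      ∀ a, t a = TensorProduct.lift (Ac.mul.compr₂ Ac.aut.symm.toLinearMap)
        (LinearMap.lTensor A (φ ∘ₗ Hh.antipode) (Ac.coact (Ac.aut a))) := by
  let i1 := utRingH Hh.toMonoidalHomBialgebra
  let i2 := utHopf Hh
  let i3 := utRingA Ac
  let i4 := utAlgA Ac
  obtain ⟨h1, h2, h3⟩ := ord_trace (utRho_comod Hh Ac) φ hφ.2.2 (fun x => ut_phi Hh Ac φ hφ x)
  refine ⟨trMap (utRho Hh Ac).toLinearMap (LinearMap.mul k A) φ, ?_, ?_, h3, ?_⟩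
  · intro a
    rw [mem_coinvA]
    exact h1 a
  · intro b hb a
    rw [mem_coinvA] at hb
    exact h2 b a hb
  · intro a
    rfl

theorem ut_antipode_one (Hh : MonoidalHomHopf k H) : Hh.antipode Hh.one = Hh.one := by
  have h := LinearMap.congr_fun Hh.antipode_mul_left Hh.one
  simp only [LinearMap.comp_apply, Hh.comul_one, TensorProduct.map_tmul, TensorProduct.lift.tmul,
    LinearMap.id_apply, Hh.mulOne, Hh.counit_one, LinearMap.toSpanSingleton_apply, one_smul] at h
  apply Hh.aut.injective
  rw [h, Hh.aut_one]

theorem ut_unitBij (Hh : MonoidalHomHopf k H)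
    (Ac : HomComoduleAlgebra Hh.toMonoidalHomBialgebra A)
    (φ : H →ₗ[k] A) (hφ : IsTotalIntegral Ac φ)
    (M : Type) [AddCommGroup M] [Module k M] (S : HomModuleOn Ac (coinvA Ac) M) :
    UnitBijectiveR Ac (coinvA Ac) S := by
  obtain ⟨t, ht1, ht2, ht3, ht4⟩ := ut_trace Hh Ac φ hφ
  have hAone : Ac.aut.symm Ac.one = Ac.one := by rw [LinearEquiv.symm_apply_eq, Ac.aut_one]
  have hA' : ∀ a b, Ac.aut.symm (Ac.mul a b) = Ac.mul (Ac.aut.symm a) (Ac.aut.symm b) :=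
    fun a b => by apply Ac.aut.injective; simp [Ac.aut_mul]
  have hS' : ∀ m, ∀ b ∈ coinvA Ac,
      S.aut.symm (S.act m b) = S.act (S.aut.symm m) (Ac.aut.symm b) := fun m b hb => by
    apply S.aut.injective
    rw [S.aut_act _ _ (mem_coinvA_symm Ac hb)]; simp
  unfold UnitBijectiveR
  generalize hR : relSubR Ac.mul Ac.aut (coinvA Ac) S.act S.aut = R
  intro ρbar θ hρ hθ
  have hle : ∀ K : Submodule k (M ⊗[k] A), (∀ m a b, b ∈ coinvA Ac →
      S.act m b ⊗ₜ Ac.aut a - S.aut m ⊗ₜ Ac.mul b a ∈ K) → R ≤ K := by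
    intro K hK
    rw [← hR]
    refine Submodule.span_le.2 ?_
    rintro _ ⟨m, a, b, hb, rfl⟩
    exact hK m a b hb
  have hrel : ∀ m a b, b ∈ coinvA Ac →
      R.mkQ (S.act m b ⊗ₜ Ac.aut a) = R.mkQ (S.aut m ⊗ₜ Ac.mul b a) := by
    intro m a b hb
    rw [← sub_eq_zero, ← map_sub]
    simp only [Submodule.mkQ_apply, Submodule.Quotient.mk_eq_zero]
    rw [← hR]
    exact Submodule.subset_span ⟨m, a, b, hb, rfl⟩
  have hρ' : ∀ y, ρbar (R.mkQ y) = TensorProduct.map R.mkQ LinearMap.id (quotCoactPreR Ac S.aut y) :=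
    fun y => LinearMap.congr_fun hρ y
  have hθ' : ∀ y, θ (R.mkQ y) =
      R.mkQ (TensorProduct.map S.aut.symm.toLinearMap Ac.aut.symm.toLinearMap y) :=
    fun y => LinearMap.congr_fun hθ y
  refine ⟨?_, ?_, ?_⟩
  · intro m
    rw [hρ', hθ']
    simp [quotCoactPreR, Ac.coact_one, hAone, Hh.aut_one]
  · let E : M ⊗[k] A →ₗ[k] M := S.aut.symm.toLinearMap ∘ₗ TensorProduct.lift S.act ∘ₗ
      LinearMap.lTensor M t
    have hE : R ≤ LinearMap.ker E := by
      apply hle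
      intro m a b hb
      have e1 : t (Ac.mul b a) = Ac.mul b (Ac.aut.symm (t (Ac.aut a))) := by
        have := ht2 (Ac.aut b) ((mem_coinvA_aut Ac b).1 hb) (Ac.aut a)
        rw [hA', hA'] at this
        simpa using this
      have e2 := S.act_act m b hb _ (mem_coinvA_symm Ac (ht1 (Ac.aut a)))
      simp only [LinearEquiv.apply_symm_apply] at e2
      simp [E, e1, e2]
    intro m m' hmm
    have h1 : ∀ m, R.liftQ E hE (R.mkQ (S.aut.symm m ⊗ₜ Ac.one)) = S.aut.symm m := by
      intro m
      simp [E, ht3, S.act_one]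
    have h2 := congrArg (R.liftQ E hE) hmm
    simp only at h2
    rw [h1, h1] at h2
    exact S.aut.symm.injective h2
  · intro x hx
    obtain ⟨y, rfl⟩ := R.mkQ_surjective x
    let f : A ⊗[k] H →ₗ[k] A := TensorProduct.lift (Ac.mul.compr₂ Ac.aut.symm.toLinearMap) ∘ₗ
      TensorProduct.map Ac.aut.toLinearMap (φ ∘ₗ Hh.antipode)
    let τ0 : (M ⊗[k] A) ⊗[k] H →ₗ[k] M ⊗[k] A :=
      TensorProduct.map S.aut.toLinearMap f ∘ₗ (TensorProduct.assoc k M A H).toLinearMap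
    let g : M ⊗[k] A →ₗ[k] H →ₗ[k] ((M ⊗[k] A) ⧸ R) := TensorProduct.curry (R.mkQ ∘ₗ τ0)
    have hg : R ≤ LinearMap.ker g := by
      apply hle
      intro m a b hb
      rw [LinearMap.mem_ker, map_sub, sub_eq_zero]
      apply LinearMap.ext
      intro h
      have e := hrel (S.aut m) (Ac.mul a (Ac.aut.symm (Ac.aut.symm (φ (Hh.antipode h)))))
        (Ac.aut b) ((mem_coinvA_aut Ac b).1 hb)
      rw [Ac.hom_assoc, ← S.aut_act _ _ hb, Ac.aut_mul] at e
      simp only [LinearEquiv.apply_symm_apply] at e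
      simp only [g, τ0, f, TensorProduct.curry_apply, LinearMap.comp_apply, LinearEquiv.coe_coe,
        TensorProduct.assoc_tmul, TensorProduct.map_tmul, TensorProduct.lift.tmul,
        LinearMap.compr₂_apply, hA', LinearEquiv.symm_apply_apply]
      exact e
    let τ : ((M ⊗[k] A) ⧸ R) ⊗[k] H →ₗ[k] ((M ⊗[k] A) ⧸ R) := TensorProduct.lift (R.liftQ g hg)
    have hτ : ∀ w, τ (TensorProduct.map R.mkQ LinearMap.id w) = R.mkQ (τ0 w) := by
      intro w
      induction w with
      | zero => simp
      | add a b ha hb => simp only [map_add, ha, hb]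
      | tmul c d => simp [τ, g]
    have c1 : ∀ y, τ0 (quotCoactPreR Ac S.aut y) = LinearMap.lTensor M t y := by
      intro y
      induction y with
      | zero => simp
      | add a b ha hb => simp only [map_add, ha, hb]
      | tmul m a =>
        have h3 : Ac.coact (Ac.aut a) = _ := LinearMap.congr_fun Ac.coact_aut a
        simp only [LinearMap.comp_apply] at h3
        simp only [τ0, quotCoactPreR, LinearMap.comp_apply, LinearEquiv.coe_coe,
          LinearEquiv.apply_symm_apply, TensorProduct.map_tmul, LinearMap.lTensor_tmul, ht4, h3]
        congr 1
        generalize Ac.coact a = v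
        induction v with
        | zero => simp
        | add a b ha hb => simp only [map_add, ha, hb]
        | tmul c d => simp [f]
    have c2 : ∀ y, τ0 (TensorProduct.map S.aut.symm.toLinearMap Ac.aut.symm.toLinearMap y
        ⊗ₜ Hh.one) = y := by
      intro y
      induction y with
      | zero => simp
      | add a b ha hb => simp only [map_add, add_tmul, ha, hb]
      | tmul m a => simp [τ0, f, ut_antipode_one, hφ.2.2, Ac.mulOne]
    have c3 : ∀ y, R.mkQ (LinearMap.lTensor M t y) =
        R.mkQ (S.aut.symm (TensorProduct.lift S.act (LinearMap.lTensor M t y)) ⊗ₜ Ac.one) := by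
      intro y
      induction y with
      | zero => simp
      | add a b ha hb => simp only [map_add, add_tmul, ha, hb]
      | tmul m a =>
        have e := hrel (S.aut.symm m) Ac.one _ (mem_coinvA_symm Ac (ht1 a))
        rw [← hS' _ _ (ht1 a), Ac.mulOne, Ac.aut_one] at e
        simp only [LinearEquiv.apply_symm_apply] at e
        simp only [LinearMap.lTensor_tmul, TensorProduct.lift.tmul]
        exact e.symm
    refine ⟨TensorProduct.lift S.act (LinearMap.lTensor M t y), ?_⟩
    rw [← c3, ← c1, ← hτ, ← hρ', hx, hθ']
    have := hτ (TensorProduct.map S.aut.symm.toLinearMap Ac.aut.symm.toLinearMap y ⊗ₜ Hh.one)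
    rw [c2] at this
    rw [← this, TensorProduct.map_tmul]
    rfl

end Untwist3

end


/-! STATEMENT 15 (Schneider-type affineness): If `can` is surjective and there is a
total integral, then `(F,G)` is a pair of inverse equivalences: all adjunction units
and counits are bijective. -/
theorem statement15
    (k : Type) [Field k] (H : Type) [AddCommGroup H] [Module k H]
    (Hh : MonoidalHomHopf k H)
    (Sinv : H →ₗ[k] H)
    (hSinv₁ : Sinv ∘ₗ Hh.antipode = LinearMap.id)
    (hSinv₂ : Hh.antipode ∘ₗ Sinv = LinearMap.id)
    (A : Type) [AddCommGroup A] [Module k A]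
    (Ac : HomComoduleAlgebra Hh.toMonoidalHomBialgebra A)
    -- there exists a total integral
    (φ : H →ₗ[k] A) (hφ : IsTotalIntegral Ac φ)
    -- can : A ⊗_B A → A ⊗ H is surjective (equivalently, its lift to A ⊗ A is)
    (hcan : Function.Surjective (canPreLin Ac)) :
    (∀ (M : Type) [AddCommGroup M] [Module k M] (S : HomModuleOn Ac (coinvA Ac) M),
        UnitBijectiveR Ac (coinvA Ac) S) ∧
    (∀ (N : Type) [AddCommGroup N] [Module k N] (P : HomHopfModule Ac N),
        CounitBijectiveR Ac (coinvA Ac) P) := by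
  exact ⟨fun M _ _ S => ut_unitBij Hh Ac φ hφ M S,
    fun N _ _ P => ut_counitBij Hh Sinv hSinv₁ hSinv₂ Ac φ hφ hcan N P⟩
end

section
/- Let (H,α) be a monoidal Hom-Hopf algebra and (M,μ) a right (H,α)-Hom-comodule whose coaction ρ_M admits a right (H,α)-colinear retraction λ_M: M⊗H→M (i.e. λ_M∘ρ_M = id_M, λ_M commutes with the automorphisms, and λ_M is colinear for the coaction (m⊗h)↦(μ⁻¹(m)⊗h₁)⊗α(h₂) on M⊗H). Then M is right (H,α)-coflat: for every surjective morphism f:(N,ν)→(W,ω) of left (H,α)-Hom-comodules, the induced map M□_H f: M□_H N→M□_H W is surjective. -/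
open TensorProduct

/-- The projection `M ⊗ V → M □ V`. -/
noncomputable def cotProj16 {k H M V : Type} [Field k] [AddCommGroup H] [Module k H]
    [AddCommGroup M] [Module k M] [AddCommGroup V] [Module k V]
    (lam : M ⊗[k] H →ₗ[k] M) (a : M ≃ₗ[k] M) (r : V →ₗ[k] H ⊗[k] V) (b : V ≃ₗ[k] V) :
    M ⊗[k] V →ₗ[k] M ⊗[k] V :=
  TensorProduct.map lam b.toLinearMap ∘ₗ (TensorProduct.assoc k M H V).symm.toLinearMap ∘ₗ
    TensorProduct.map a.symm.toLinearMap r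

/-! STATEMENT 16: A right Hom-comodule `M` whose coaction admits a colinear
retraction (i.e. `M` is injective/relative-injective) is right (H,α)-coflat. -/
theorem statement16
    (k : Type) [Field k] (H : Type) [AddCommGroup H] [Module k H]
    (Hh : MonoidalHomHopf k H)
    (M : Type) [AddCommGroup M] [Module k M]
    (Mc : HomComodule Hh.toMonoidalHomBialgebra M)
    -- λ_M is a right (H,α)-colinear retraction of ρ_M
    (lamM : M ⊗[k] H →ₗ[k] M)
    (hlam₁ : lamM ∘ₗ Mc.coact = LinearMap.id)
    (hlam₂ : lamM ∘ₗ (TensorProduct.map Mc.aut.toLinearMap Hh.aut.toLinearMap) =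
      Mc.aut.toLinearMap ∘ₗ lamM)
    (hlam₃ : Mc.coact ∘ₗ lamM =
      (TensorProduct.map lamM LinearMap.id) ∘ₗ
        (TensorProduct.map LinearMap.id Hh.aut.toLinearMap) ∘ₗ
          (TensorProduct.assoc k M H H).symm.toLinearMap ∘ₗ
            (TensorProduct.map Mc.aut.symm.toLinearMap Hh.comul)) :
    -- M is right (H,α)-coflat
    ∀ (N W : Type) [AddCommGroup N] [Module k N] [AddCommGroup W] [Module k W]
      (Nc : HomLeftComodule Hh.toMonoidalHomBialgebra N)
      (Wc : HomLeftComodule Hh.toMonoidalHomBialgebra W)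
      (f : N →ₗ[k] W),
      Wc.coact ∘ₗ f = (TensorProduct.map LinearMap.id f) ∘ₗ Nc.coact →
      f ∘ₗ Nc.aut.toLinearMap = Wc.aut.toLinearMap ∘ₗ f →
      Function.Surjective f →
      ∀ t ∈ cotensorSub Mc.coact Mc.aut Wc.coact Wc.aut,
        ∃ s ∈ cotensorSub Mc.coact Mc.aut Nc.coact Nc.aut,
          (TensorProduct.map (LinearMap.id (M := M)) f) s = t := by
  intro N W _ _ _ _ Nc Wc f hf₁ hf₂ hf t ht
  have hproj : cotProj16 lamM Mc.aut Wc.coact Wc.aut t = t := by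
    have h : TensorProduct.map Mc.coact Wc.aut.symm.toLinearMap t =
        (TensorProduct.assoc k M H W).symm
          (TensorProduct.map Mc.aut.symm.toLinearMap Wc.coact t) := by
      simpa [cotensorSub, sub_eq_zero] using ht
    have h2 : (TensorProduct.map lamM Wc.aut.toLinearMap) ∘ₗ
        TensorProduct.map Mc.coact Wc.aut.symm.toLinearMap = LinearMap.id := by
      rw [← TensorProduct.map_comp, hlam₁]
      ext; simp
    have h3 := LinearMap.congr_fun h2 t
    simp only [LinearMap.comp_apply, LinearMap.id_apply, h] at h3
    exact h3
  have hnat : ∀ s, TensorProduct.map (LinearMap.id (M := M)) f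
      (cotProj16 lamM Mc.aut Nc.coact Nc.aut s) =
      cotProj16 lamM Mc.aut Wc.coact Wc.aut (TensorProduct.map (LinearMap.id (M := M)) f s) := by
    intro s
    induction s with
    | zero => simp
    | add x y hx hy => simp only [map_add, hx, hy]
    | tmul m n =>
      have e := LinearMap.congr_fun hf₁ n
      simp only [LinearMap.comp_apply] at e
      simp only [cotProj16, LinearMap.comp_apply, TensorProduct.map_tmul, LinearMap.id_apply, e]
      generalize Nc.coact n = x
      induction x with
      | zero => simp
      | add x y hx hy => simp only [map_add, TensorProduct.tmul_add, hx, hy]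
      | tmul h n =>
        have e := LinearMap.congr_fun hf₂ n
        simp only [LinearMap.comp_apply, LinearEquiv.coe_coe] at e
        simp [e]
  have hlam₂' : ∀ m h, Mc.aut.symm (lamM (m ⊗ₜ h)) =
      lamM (Mc.aut.symm m ⊗ₜ Hh.aut.symm h) := by
    intro m h
    rw [LinearEquiv.symm_apply_eq]
    have e := LinearMap.congr_fun hlam₂ (Mc.aut.symm m ⊗ₜ Hh.aut.symm h)
    simpa using e
  have hmem : ∀ s, cotProj16 lamM Mc.aut Nc.coact Nc.aut s ∈
      cotensorSub Mc.coact Mc.aut Nc.coact Nc.aut := by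
    intro s
    induction s with
    | zero => simp
    | add x y hx hy => rw [map_add]; exact Submodule.add_mem _ hx hy
    | tmul m n =>
      let G : (H ⊗[k] H) ⊗[k] N →ₗ[k] (M ⊗[k] H) ⊗[k] N :=
        TensorProduct.map (TensorProduct.map
          (lamM ∘ₗ TensorProduct.mk k M H (Mc.aut.symm (Mc.aut.symm m))) Hh.aut.toLinearMap)
          Nc.aut.toLinearMap
      have hL : ∀ x : H ⊗[k] N, TensorProduct.map Mc.coact Nc.aut.symm.toLinearMap
          (TensorProduct.map lamM Nc.aut.toLinearMap
            ((TensorProduct.assoc k M H N).symm (Mc.aut.symm m ⊗ₜ x))) =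
          G (TensorProduct.map Hh.comul Nc.aut.symm.toLinearMap x) := by
        intro x
        induction x with
        | zero => simp
        | add x y hx hy => simp only [map_add, TensorProduct.tmul_add, hx, hy]
        | tmul h n =>
          have e := LinearMap.congr_fun hlam₃ (Mc.aut.symm m ⊗ₜ h)
          simp only [LinearMap.comp_apply, TensorProduct.map_tmul, LinearEquiv.coe_coe] at e
          simp only [TensorProduct.assoc_symm_tmul, TensorProduct.map_tmul, LinearEquiv.coe_coe,
            LinearEquiv.symm_apply_apply, LinearEquiv.apply_symm_apply, e, G]
          congr 1
          generalize Hh.comul h = y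
          induction y with
          | zero => simp
          | add x y hx hy => simp only [map_add, TensorProduct.tmul_add, hx, hy]
          | tmul a b => simp
      have hR : ∀ x : H ⊗[k] N, (TensorProduct.assoc k M H N).symm
          (TensorProduct.map Mc.aut.symm.toLinearMap Nc.coact
          (TensorProduct.map lamM Nc.aut.toLinearMap
            ((TensorProduct.assoc k M H N).symm (Mc.aut.symm m ⊗ₜ x)))) =
          G ((TensorProduct.assoc k H H N).symm
            (TensorProduct.map Hh.aut.symm.toLinearMap Nc.coact x)) := by
        intro x
        induction x with
        | zero => simp
        | add x y hx hy => simp only [map_add, TensorProduct.tmul_add, hx, hy]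
        | tmul h n =>
          have e := LinearMap.congr_fun Nc.coact_aut n
          simp only [LinearMap.comp_apply, LinearEquiv.coe_coe] at e
          simp only [TensorProduct.assoc_symm_tmul, TensorProduct.map_tmul, LinearEquiv.coe_coe,
            e, hlam₂']
          generalize Nc.coact n = y
          induction y with
          | zero => simp
          | add x y hx hy => simp only [map_add, TensorProduct.tmul_add, hx, hy]
          | tmul a b => simp [G]
      have e := LinearMap.congr_fun Nc.coassoc n
      simp only [LinearMap.comp_apply, LinearEquiv.coe_coe] at e
      simp only [cotensorSub, LinearMap.mem_ker, LinearMap.sub_apply, sub_eq_zero, cotProj16,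
        LinearMap.comp_apply, TensorProduct.map_tmul, LinearEquiv.coe_coe]
      rw [hL, hR, e]
  obtain ⟨s, hs⟩ := TensorProduct.map_surjective
    (g := (LinearMap.id (M := M) (R := k))) (g' := f) Function.surjective_id hf t
  exact ⟨_, hmem s, by rw [hnat, hs, hproj]⟩
end
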